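/- (Fully discrete L² estimate.) Under the hypotheses β₀ ∈ W_+^6(H^{1/2}(Γ)) and β₁ ∈ W_+^5(H^{-1/2}(Γ)), the errors e_k^h := u^h − u_k^h and e_k^⋆ := u^⋆ − u_k^⋆ of the trapezoidal-rule time discretization of the semidiscrete problem satisfy, for all t ≥ 0, ‖e_k^h(t)‖_{Ω_-} + ‖e_k^⋆(t)‖_{ℝ^d∖Γ} ≤ C k² t² (H₃(β₀⁽³⁾,t|H^{1/2}(Γ)) + H₂(β₁⁽³⁾,t|H^{-1/2}(Γ))), with C independent of t, k, and the discrete spaces. -/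

import Mathlib

open scoped RealInnerProductSpace

noncomputable section

/-- A function of time is causal when it vanishes for `t ≤ 0`. -/
def Causal {X : Type*} [AddCommGroup X] (f : ℝ → X) : Prop := ∀ t ≤ 0, f t = 0

/-- The Sobolev class `W_+^k(X)` of causal functions of class `C^{k-1}` whose `k`-th
distributional derivative is integrable. -/
def WP {X : Type*} [NormedAddCommGroup X] [NormedSpace ℝ X] (k : ℕ) (f : ℝ → X) : Prop :=
  ContDiff ℝ (k - 1 : ℕ) f ∧ Causal f ∧
    MeasureTheory.Integrable (iteratedDeriv k f) ∧
    ∀ s t : ℝ, iteratedDeriv (k - 1) f t - iteratedDeriv (k - 1) f s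
      = ∫ τ in s..t, iteratedDeriv k f τ

/-- The accumulated quantity `H_k(f,t|X) = ∑_{j=0}^k ∫_0^t ‖f^{(j)}(τ)‖_X dτ`. -/
noncomputable def Hfun {X : Type*} [NormedAddCommGroup X] [NormedSpace ℝ X]
    (k : ℕ) (f : ℝ → X) (t : ℝ) : ℝ :=
  ∑ j ∈ Finset.range (k + 1), ∫ τ in (0:ℝ)..t, ‖iteratedDeriv j f τ‖

/-- The antidifferentiation operator `∂⁻¹ f (t) = ∫_0^t f(τ) dτ` (for causal `f`). -/
noncomputable def aInt {X : Type*} [NormedAddCommGroup X] [NormedSpace ℝ X]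
    (f : ℝ → X) (t : ℝ) : X := ∫ τ in (0:ℝ)..t, f τ

/-- The averaging operator `α_k g (t) = (g t + g (t-k))/2`. -/
def amean {X : Type*} [AddCommGroup X] [Module ℝ X] (k : ℝ) (f : ℝ → X) (t : ℝ) : X :=
  (2⁻¹ : ℝ) • (f t + f (t - k))

/-- The differencing operator `∂_k g (t) = (g t - g (t-k))/k`. -/
def dquot {X : Type*} [AddCommGroup X] [Module ℝ X] (k : ℝ) (f : ℝ → X) (t : ℝ) : X :=
  (k⁻¹ : ℝ) • (f t - f (t - k))

/-- A (strong, causal) solution of the exotic transmission problem (2.10).  The exterior field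
`u^⋆` is represented together with the `H(div)` realization `wst` of its gradient, so that
`Δu^⋆(t) = ∇·wst t` and `∂_ν^± u^⋆(t) = γ_ν^± (wst t)`. -/
def Solves210
    {L2Ω L2Ωv L2s L2sv Hp Hm H1Ω H1s Hdiv : Type*}
    [NormedAddCommGroup L2Ω] [InnerProductSpace ℝ L2Ω]
    [NormedAddCommGroup L2Ωv] [InnerProductSpace ℝ L2Ωv]
    [NormedAddCommGroup L2s] [InnerProductSpace ℝ L2s]
    [NormedAddCommGroup L2sv] [InnerProductSpace ℝ L2sv]
    [NormedAddCommGroup Hp] [InnerProductSpace ℝ Hp]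
    [NormedAddCommGroup Hm] [InnerProductSpace ℝ Hm]
    [NormedAddCommGroup H1Ω] [NormedSpace ℝ H1Ω]
    [NormedAddCommGroup H1s] [NormedSpace ℝ H1s]
    [NormedAddCommGroup Hdiv] [NormedSpace ℝ Hdiv]
    (ι : H1Ω →L[ℝ] L2Ω) (grad : H1Ω →L[ℝ] L2Ωv) (γ : H1Ω →L[ℝ] Hp)
    (ιs : H1s →L[ℝ] L2s) (grads : H1s →L[ℝ] L2sv) (γm γp : H1s →L[ℝ] Hp)
    (ιdiv : Hdiv →L[ℝ] L2sv) (divs : Hdiv →L[ℝ] L2s) (γνm γνp : Hdiv →L[ℝ] Hm)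
    (dpair : Hm →L[ℝ] Hp →L[ℝ] ℝ)
    (cinv2 : L2Ω →L[ℝ] L2Ω) (kap : L2Ωv →L[ℝ] L2Ωv)
    (Uh : Submodule ℝ H1Ω) (Xh : Submodule ℝ Hm) (Yh : Submodule ℝ Hp)
    (β0 : ℝ → Hp) (β1 : ℝ → Hm)
    (uh : ℝ → H1Ω) (us : ℝ → H1s) (wst : ℝ → Hdiv) : Prop :=
  (∀ t : ℝ, uh t ∈ Uh) ∧ Causal uh ∧ Causal us ∧ Causal wst ∧
  ContDiff ℝ 2 (fun τ => ι (uh τ)) ∧ ContDiff ℝ 2 (fun τ => ιs (us τ)) ∧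
  Continuous uh ∧ Continuous us ∧
  (∀ t : ℝ, ιdiv (wst t) = grads (us t)) ∧
  (∀ t : ℝ, ∀ w ∈ Uh,
    ⟪cinv2 (iteratedDeriv 2 (fun τ => ι (uh τ)) t), ι w⟫
      + ⟪kap (grad (uh t)), grad w⟫
      + dpair (γνm (wst t) - γνp (wst t)) (γ w)
      = dpair (β1 t) (γ w)) ∧
  (∀ t : ℝ, iteratedDeriv 2 (fun τ => ιs (us τ)) t = divs (wst t)) ∧
  (∀ t : ℝ, γm (us t) - γp (us t) ∈ Yh) ∧
  (∀ t : ℝ, γνm (wst t) - γνp (wst t) ∈ Xh) ∧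
  (∀ t : ℝ, ∀ ψ ∈ Yh, dpair (γνm (wst t)) ψ = 0) ∧
  (∀ t : ℝ, ∀ μ ∈ Xh, dpair μ (γ (uh t) - γp (us t) - β0 t) = 0)

/-- A (causal) solution of the fully discrete problem (4.3): trapezoidal-rule time stepping
of the exotic transmission problem (2.10), extended to continuous time. -/
def Solves43
    {L2Ω L2Ωv L2s L2sv Hp Hm H1Ω H1s Hdiv : Type*}
    [NormedAddCommGroup L2Ω] [InnerProductSpace ℝ L2Ω]
    [NormedAddCommGroup L2Ωv] [InnerProductSpace ℝ L2Ωv]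
    [NormedAddCommGroup L2s] [InnerProductSpace ℝ L2s]
    [NormedAddCommGroup L2sv] [InnerProductSpace ℝ L2sv]
    [NormedAddCommGroup Hp] [InnerProductSpace ℝ Hp]
    [NormedAddCommGroup Hm] [InnerProductSpace ℝ Hm]
    [NormedAddCommGroup H1Ω] [NormedSpace ℝ H1Ω]
    [NormedAddCommGroup H1s] [NormedSpace ℝ H1s]
    [NormedAddCommGroup Hdiv] [NormedSpace ℝ Hdiv]
    (ι : H1Ω →L[ℝ] L2Ω) (grad : H1Ω →L[ℝ] L2Ωv) (γ : H1Ω →L[ℝ] Hp)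
    (ιs : H1s →L[ℝ] L2s) (grads : H1s →L[ℝ] L2sv) (γm γp : H1s →L[ℝ] Hp)
    (ιdiv : Hdiv →L[ℝ] L2sv) (divs : Hdiv →L[ℝ] L2s) (γνm γνp : Hdiv →L[ℝ] Hm)
    (dpair : Hm →L[ℝ] Hp →L[ℝ] ℝ)
    (cinv2 : L2Ω →L[ℝ] L2Ω) (kap : L2Ωv →L[ℝ] L2Ωv)
    (Uh : Submodule ℝ H1Ω) (Xh : Submodule ℝ Hm) (Yh : Submodule ℝ Hp)
    (k : ℝ) (β0 : ℝ → Hp) (β1 : ℝ → Hm)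
    (ukh : ℝ → H1Ω) (uks : ℝ → H1s) (wkst : ℝ → Hdiv) : Prop :=
  (∀ t : ℝ, ukh t ∈ Uh) ∧ Causal ukh ∧ Causal uks ∧ Causal wkst ∧
  (∀ t : ℝ, ιdiv (wkst t) = grads (uks t)) ∧
  (∀ t : ℝ, ∀ w ∈ Uh,
    ⟪cinv2 (dquot k (dquot k (fun τ => ι (ukh τ))) t), ι w⟫
      + ⟪kap (grad (amean k (amean k ukh) t)), grad w⟫
      + dpair (amean k (amean k (fun τ => γνm (wkst τ) - γνp (wkst τ))) t) (γ w)
      = dpair (amean k (amean k β1) t) (γ w)) ∧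
  (∀ t : ℝ, dquot k (dquot k (fun τ => ιs (uks τ))) t
      = amean k (amean k (fun τ => divs (wkst τ))) t) ∧
  (∀ t : ℝ, γm (uks t) - γp (uks t) ∈ Yh) ∧
  (∀ t : ℝ, γνm (wkst t) - γνp (wkst t) ∈ Xh) ∧
  (∀ t : ℝ, ∀ ψ ∈ Yh, dpair (γνm (wkst t)) ψ = 0) ∧
  (∀ t : ℝ, ∀ μ ∈ Xh, dpair μ (γ (ukh t) - γp (uks t) - β0 t) = 0)

/-!
On pairs of interior and exterior fields, with the Dirichlet datum lifted, the semidiscrete problem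
is the weak wave equation `(i v)'' + D* D v = f + D* g` on the closure of the trial space, and the
fully discrete one its trapezoidal rule. Averaging the former by `α_k²` shows that the error solves
the trapezoidal scheme with right-hand side `∂_k² (i u) - α_k² (i u)''`. Since `∂_k w = S_k w'` for
the Steklov average `S_k`, this is `T (i u)''` with `T = S_k² - α_k²`. Now `T` commutes with the
wave equation, so `T v` is again a solution, with data `T f` and `T g`, and energy stability bounds
`T (i v)''` by `T` of the data: all the smoothness needed is asked of the data and none of `v`.
Causality improves the trapezoidal estimate `‖T f‖ ≲ k² ‖f''‖` in `L¹(0,t)` to `min(k,t)²`, which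
keeps the factor `t²` of the final bound for `t < k`. Finally the energy balance of the scheme,
summed once for `∂_k (i e)` and once more for `i e`, produces `k² t²`.
-/

section Causal

variable {X Y : Type*} [NormedAddCommGroup X] [NormedAddCommGroup Y] {f g : ℝ → X}

protected theorem Causal.sub (hf : Causal f) (hg : Causal g) : Causal fun t => f t - g t :=
  fun t ht => by simp only [hf t ht, hg t ht, sub_zero]

protected theorem Causal.norm (hf : Causal f) : Causal fun t => ‖f t‖ :=
  fun t ht => by simp only [hf t ht, norm_zero]

variable [NormedSpace ℝ X] [NormedSpace ℝ Y]

protected theorem Causal.map (hf : Causal f) (T : X →L[ℝ] Y) : Causal fun t => T (f t) :=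
  fun t ht => by simp only [hf t ht, map_zero]

protected theorem Causal.amean (hf : Causal f) {k : ℝ} (hk : 0 ≤ k) : Causal (amean k f) :=
  fun t ht => by simp [amean, hf t ht, hf (t - k) (by linarith)]

protected theorem Causal.dquot (hf : Causal f) {k : ℝ} (hk : 0 ≤ k) : Causal (dquot k f) :=
  fun t ht => by simp [dquot, hf t ht, hf (t - k) (by linarith)]

protected theorem Causal.deriv (hf : Causal f) : Causal (deriv f) := by
  intro t ht
  by_cases hd : DifferentiableAt ℝ f t
  · refine (uniqueDiffWithinAt_Iic t).eq_deriv _ hd.hasDerivAt.hasDerivWithinAt ?_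
    exact (hasDerivWithinAt_const t (Set.Iic t) (0 : X)).congr
      (fun s hs => hf s (le_trans hs ht)) (hf t ht)
  · exact deriv_zero_of_not_differentiableAt hd

protected theorem Causal.iteratedDeriv (hf : Causal f) (n : ℕ) : Causal (iteratedDeriv n f) := by
  induction n with
  | zero => rwa [iteratedDeriv_zero]
  | succ n ih => rw [iteratedDeriv_succ]; exact ih.deriv

end Causal

section IteratedDeriv

variable {X Y : Type*} [NormedAddCommGroup X] [NormedSpace ℝ X]
  [NormedAddCommGroup Y] [NormedSpace ℝ Y] {f g : ℝ → X}

theorem iteratedDeriv_clm_comp {n : ℕ} (T : X →L[ℝ] Y) (hf : ContDiff ℝ n f) :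
    (iteratedDeriv n fun t => T (f t)) = fun t => T (iteratedDeriv n f t) := by
  ext t
  have h := T.iteratedFDeriv_comp_left (x := t) (i := n) hf.contDiffAt le_rfl
  exact congrArg (fun M => M fun _ => (1 : ℝ)) h

theorem iteratedDeriv_iteratedDeriv (m n : ℕ) (f : ℝ → X) :
    iteratedDeriv m (iteratedDeriv n f) = iteratedDeriv (m + n) f := by
  simp only [iteratedDeriv_eq_iterate, Function.iterate_add_apply]

theorem iteratedDeriv_two (f : ℝ → X) : iteratedDeriv 2 f = deriv (deriv f) := by
  rw [iteratedDeriv_succ, iteratedDeriv_one]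

theorem contDiff_one_deriv (hf : ContDiff ℝ 2 f) : ContDiff ℝ 1 (deriv f) :=
  ContDiff.deriv' (by simpa only [one_add_one_eq_two] using hf)

theorem contDiff_iteratedDeriv {m n : ℕ} (hf : ContDiff ℝ (m + n : ℕ) f) :
    ContDiff ℝ m (iteratedDeriv n f) := by
  rw [iteratedDeriv_eq_iterate]
  exact ContDiff.iterate_deriv' m n (by exact_mod_cast hf)

end IteratedDeriv

section TimeAverages

variable {X Y : Type*} [NormedAddCommGroup X] [NormedSpace ℝ X]
  [NormedAddCommGroup Y] [NormedSpace ℝ Y] {f g : ℝ → X} {k t : ℝ} {n : ℕ}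

/-- The Steklov average `S_k f (t) = k⁻¹ ∫_{t-k}^t f`, the averaging operator for which
`∂_k f = S_k f'`. -/
def steklov (k : ℝ) (f : ℝ → X) (t : ℝ) : X := k⁻¹ • ∫ τ in (t - k)..t, f τ

/-- The consistency defect `S_k² - α_k²` of the trapezoidal rule. -/
def trapDefect (k : ℝ) (f : ℝ → X) (t : ℝ) : X :=
  steklov k (steklov k f) t - amean k (amean k f) t

protected theorem Causal.steklov (hf : Causal f) (hk : 0 ≤ k) : Causal (steklov k f) := by
  intro t ht
  have h : ∫ τ in (t - k)..t, f τ = ∫ _ in (t - k)..t, (0 : X) := by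
    refine intervalIntegral.integral_congr fun τ hτ => hf τ ?_
    rw [Set.uIcc_of_le (by linarith)] at hτ
    exact hτ.2.trans ht
  rw [steklov, h, intervalIntegral.integral_zero, smul_zero]

protected theorem Causal.trapDefect (hf : Causal f) (hk : 0 ≤ k) : Causal (trapDefect k f) :=
  ((hf.steklov hk).steklov hk).sub ((hf.amean hk).amean hk)

theorem contDiff_amean (hf : ContDiff ℝ n f) (k : ℝ) : ContDiff ℝ n (amean k f) :=
  (hf.add (hf.comp (contDiff_id.sub contDiff_const))).const_smul _

theorem contDiff_dquot (hf : ContDiff ℝ n f) (k : ℝ) : ContDiff ℝ n (dquot k f) :=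
  (hf.sub (hf.comp (contDiff_id.sub contDiff_const))).const_smul _

theorem continuous_amean (hf : Continuous f) (k : ℝ) : Continuous (amean k f) := by
  unfold amean; fun_prop

theorem continuous_dquot (hf : Continuous f) (k : ℝ) : Continuous (dquot k f) := by
  unfold dquot; fun_prop

theorem iteratedDeriv_comp_sub (n : ℕ) (f : ℝ → X) (k t : ℝ) :
    iteratedDeriv n (fun τ => f (τ - k)) t = iteratedDeriv n f (t - k) :=
  congrFun (iteratedDeriv_comp_sub_const n f k) t

theorem iteratedDeriv_amean (hf : ContDiff ℝ n f) (k : ℝ) :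
    iteratedDeriv n (amean k f) = amean k (iteratedDeriv n f) := by
  have hs : ContDiff ℝ n fun τ => f (τ - k) := hf.comp (contDiff_id.sub contDiff_const)
  ext t
  refine (iteratedDeriv_const_smul (hf.add hs).contDiffAt (2⁻¹ : ℝ)).trans ?_
  rw [iteratedDeriv_fun_add hf.contDiffAt hs.contDiffAt, iteratedDeriv_comp_sub, amean]

theorem iteratedDeriv_dquot (hf : ContDiff ℝ n f) (k : ℝ) :
    iteratedDeriv n (dquot k f) = dquot k (iteratedDeriv n f) := by
  have hs : ContDiff ℝ n fun τ => f (τ - k) := hf.comp (contDiff_id.sub contDiff_const)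
  ext t
  refine (iteratedDeriv_const_smul (hf.sub hs).contDiffAt k⁻¹).trans ?_
  rw [iteratedDeriv_fun_sub hf.contDiffAt hs.contDiffAt, iteratedDeriv_comp_sub, dquot]

theorem amean_mem {p : Submodule ℝ X} (hf : ∀ τ, f τ ∈ p) (k t : ℝ) : amean k f t ∈ p :=
  p.smul_mem _ (p.add_mem (hf t) (hf (t - k)))

theorem map_amean (T : X →L[ℝ] Y) (k : ℝ) (f : ℝ → X) (t : ℝ) :
    T (amean k f t) = amean k (fun τ => T (f τ)) t := by
  simp only [amean, map_smul, map_add]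

theorem map_dquot (T : X →L[ℝ] Y) (k : ℝ) (f : ℝ → X) (t : ℝ) :
    T (dquot k f t) = dquot k (fun τ => T (f τ)) t := by
  simp only [dquot, map_smul, map_sub]

theorem tendsto_dquot {f' : X} (hf : HasDerivAt f f' t) :
    Filter.Tendsto (fun k => dquot k f t) (nhdsWithin 0 (Set.Ioi 0)) (nhds f') := by
  have hneg : Filter.Tendsto (fun k : ℝ => -k) (nhdsWithin 0 (Set.Ioi 0))
      (nhdsWithin 0 (Set.Iio 0)) := by
    simpa using tendsto_neg_nhdsGT (a := (0 : ℝ))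
  refine (hf.tendsto_slope_zero_left.comp hneg).congr fun k => ?_
  simp only [Function.comp_apply, dquot, ← sub_eq_add_neg, inv_neg, neg_smul, ← smul_neg, neg_sub]

theorem steklov_add (hf : Continuous f) (hg : Continuous g) (k t : ℝ) :
    steklov k (fun τ => f τ + g τ) t = steklov k f t + steklov k g t := by
  simp only [steklov]
  rw [intervalIntegral.integral_add (hf.intervalIntegrable _ _) (hg.intervalIntegrable _ _),
    smul_add]

theorem steklov_sub (hf : Continuous f) (hg : Continuous g) (k t : ℝ) :
    steklov k (fun τ => f τ - g τ) t = steklov k f t - steklov k g t := by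
  simp only [steklov]
  rw [intervalIntegral.integral_sub (hf.intervalIntegrable _ _) (hg.intervalIntegrable _ _),
    smul_sub]

theorem norm_steklov_le (hk : 0 < k) (f : ℝ → X) (t : ℝ) :
    ‖steklov k f t‖ ≤ steklov k (fun τ => ‖f τ‖) t := by
  rw [steklov, norm_smul, Real.norm_of_nonneg (inv_nonneg.2 hk.le)]
  exact mul_le_mul_of_nonneg_left
    (intervalIntegral.norm_integral_le_integral_norm (by linarith)) (inv_nonneg.2 hk.le)

theorem norm_amean_le (k : ℝ) (f : ℝ → X) (t : ℝ) :
    ‖amean k f t‖ ≤ amean k (fun τ => ‖f τ‖) t := by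
  rw [amean, norm_smul, Real.norm_of_nonneg (by norm_num)]
  exact mul_le_mul_of_nonneg_left (norm_add_le _ _) (by norm_num)

theorem steklov_eq_dquot_aInt (hf : Continuous f) (k : ℝ) : steklov k f = dquot k (aInt f) := by
  ext t
  rw [steklov, dquot, aInt, aInt, intervalIntegral.integral_interval_sub_left
    (hf.intervalIntegrable _ _) (hf.intervalIntegrable _ _)]

variable [CompleteSpace X]

theorem hasDerivAt_aInt (hf : Continuous f) (t : ℝ) : HasDerivAt (aInt f) (f t) t :=
  (hf.integral_hasStrictDerivAt 0 t).hasDerivAt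

theorem deriv_aInt (hf : Continuous f) : deriv (aInt f) = f :=
  funext fun t => (hasDerivAt_aInt hf t).deriv

theorem contDiff_aInt (hf : ContDiff ℝ n f) : ContDiff ℝ (n + 1 : ℕ) (aInt f) := by
  rw [Nat.cast_succ, contDiff_succ_iff_deriv, deriv_aInt hf.continuous]
  exact ⟨fun t => (hasDerivAt_aInt hf.continuous t).differentiableAt, by simp, hf⟩

theorem contDiff_succ_steklov (hf : ContDiff ℝ n f) (k : ℝ) :
    ContDiff ℝ (n + 1 : ℕ) (steklov k f) := by
  rw [steklov_eq_dquot_aInt hf.continuous]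
  exact contDiff_dquot (contDiff_aInt hf) k

theorem contDiff_steklov (hf : ContDiff ℝ n f) (k : ℝ) : ContDiff ℝ n (steklov k f) :=
  (contDiff_succ_steklov hf k).of_le (by exact_mod_cast n.le_succ)

theorem continuous_steklov (hf : Continuous f) (k : ℝ) : Continuous (steklov k f) :=
  (contDiff_steklov (n := 0) (contDiff_zero.2 hf) k).continuous

theorem deriv_steklov (hf : Continuous f) (k : ℝ) : deriv (steklov k f) = dquot k f := by
  have haInt : ContDiff ℝ (1 : ℕ) (aInt f) := contDiff_aInt (n := 0) (contDiff_zero.2 hf)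
  rw [steklov_eq_dquot_aInt hf, ← iteratedDeriv_one, iteratedDeriv_dquot haInt, iteratedDeriv_one,
    deriv_aInt hf]

theorem steklov_deriv (hf : ContDiff ℝ 1 f) (k : ℝ) : steklov k (deriv f) = dquot k f := by
  ext t
  rw [steklov, dquot, intervalIntegral.integral_deriv_eq_sub
    (fun τ _ => hf.differentiable_one τ)
    ((hf.continuous_deriv_one).intervalIntegrable _ _)]

theorem iteratedDeriv_steklov (hf : ContDiff ℝ n f) (k : ℝ) :
    iteratedDeriv n (steklov k f) = steklov k (iteratedDeriv n f) := by
  induction n generalizing f with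
  | zero => simp only [iteratedDeriv_zero]
  | succ n ih =>
    have h1 : ContDiff ℝ 1 f := hf.of_le (by exact_mod_cast Nat.le_add_left 1 n)
    have h' : ContDiff ℝ n (deriv f) := ContDiff.deriv' hf
    rw [iteratedDeriv_succ', iteratedDeriv_succ', deriv_steklov hf.continuous, ← steklov_deriv h1,
      ih h']

theorem map_steklov [CompleteSpace Y] (T : X →L[ℝ] Y) (hf : Continuous f) (k t : ℝ) :
    T (steklov k f t) = steklov k (fun τ => T (f τ)) t := by
  rw [steklov, steklov, map_smul, T.intervalIntegral_comp_comm (hf.intervalIntegrable _ _)]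

theorem map_trapDefect [CompleteSpace Y] (T : X →L[ℝ] Y) (hf : Continuous f) (k t : ℝ) :
    T (trapDefect k f t) = trapDefect k (fun τ => T (f τ)) t := by
  rw [trapDefect, map_sub, map_steklov T (continuous_steklov hf k), map_amean, trapDefect]
  simp only [map_steklov T hf, map_amean]

theorem trapDefect_add (hf : Continuous f) (hg : Continuous g) (k t : ℝ) :
    trapDefect k (fun τ => f τ + g τ) t = trapDefect k f t + trapDefect k g t := by
  have hsteklov : steklov k (steklov k fun τ => f τ + g τ) t
      = steklov k (steklov k f) t + steklov k (steklov k g) t := by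
    rw [funext (steklov_add hf hg k), steklov_add (continuous_steklov hf k)
      (continuous_steklov hg k)]
  rw [trapDefect, hsteklov, trapDefect, trapDefect]
  simp only [amean]
  module

theorem contDiff_trapDefect (hf : ContDiff ℝ n f) (k : ℝ) : ContDiff ℝ n (trapDefect k f) :=
  (contDiff_steklov (contDiff_steklov hf k) k).sub (contDiff_amean (contDiff_amean hf k) k)

theorem iteratedDeriv_trapDefect (hf : ContDiff ℝ n f) (k : ℝ) :
    iteratedDeriv n (trapDefect k f) = trapDefect k (iteratedDeriv n f) := by
  ext t
  refine (iteratedDeriv_fun_sub (contDiff_steklov (contDiff_steklov hf k) k).contDiffAt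
    (contDiff_amean (contDiff_amean hf k) k).contDiffAt).trans ?_
  rw [iteratedDeriv_steklov (contDiff_steklov hf k), iteratedDeriv_steklov hf,
    iteratedDeriv_amean (contDiff_amean hf k), iteratedDeriv_amean hf, trapDefect]

theorem dquot_dquot_sub_amean_amean (hf : ContDiff ℝ 2 f) (k t : ℝ) :
    dquot k (dquot k f) t - amean k (amean k (iteratedDeriv 2 f)) t
      = trapDefect k (iteratedDeriv 2 f) t := by
  have hf' : ContDiff ℝ 1 (deriv f) := contDiff_one_deriv hf
  have hS : ContDiff ℝ 1 (steklov k (deriv f)) := contDiff_steklov (n := 1) hf' k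
  have hSS : steklov k (steklov k (iteratedDeriv 2 f)) = dquot k (dquot k f) := by
    rw [iteratedDeriv_two, ← steklov_deriv (hf.of_le one_le_two),
      ← steklov_deriv hS, deriv_steklov hf'.continuous, steklov_deriv hf']
  rw [trapDefect, hSS]

end TimeAverages

section AccumulatedNorm

variable {X Y : Type*} [NormedAddCommGroup X] [NormedAddCommGroup Y] {f g : ℝ → X} {k s t : ℝ}

/-- The accumulated norm `∫_0^t ‖f(τ)‖ dτ`, the summand of `Hfun`. -/
def accNorm (f : ℝ → X) (t : ℝ) : ℝ := ∫ τ in (0 : ℝ)..t, ‖f τ‖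

theorem accNorm_nonneg (f : ℝ → X) (ht : 0 ≤ t) : 0 ≤ accNorm f t :=
  intervalIntegral.integral_nonneg ht fun _ _ => norm_nonneg _

theorem accNorm_le_aInt {u : ℝ → ℝ} (hf : Continuous f) (hu : Continuous u) (ht : 0 ≤ t)
    (h : ∀ τ, ‖f τ‖ ≤ u τ) : accNorm f t ≤ aInt u t :=
  intervalIntegral.integral_mono ht (hf.norm.intervalIntegrable _ _) (hu.intervalIntegrable _ _) h

theorem monotone_aInt {u : ℝ → ℝ} (hu : Continuous u) (h : ∀ τ, 0 ≤ u τ) : Monotone (aInt u) :=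
  monotone_of_deriv_nonneg (fun τ => (hasDerivAt_aInt hu τ).differentiableAt)
    fun τ => (hasDerivAt_aInt hu τ).deriv ▸ h τ

theorem monotone_accNorm (hf : Continuous f) : Monotone (accNorm f) :=
  monotone_aInt hf.norm fun τ => norm_nonneg (f τ)

theorem accNorm_le_add {h : ℝ → X} (hf : Continuous f) (hg : Continuous g) (hh : Continuous h)
    (ht : 0 ≤ t) (hle : ∀ τ, ‖f τ‖ ≤ ‖g τ‖ + ‖h τ‖) : accNorm f t ≤ accNorm g t + accNorm h t := by
  refine (accNorm_le_aInt hf (hg.norm.add hh.norm) ht hle).trans_eq ?_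
  exact intervalIntegral.integral_add (hg.norm.intervalIntegrable _ _)
    (hh.norm.intervalIntegrable _ _)

variable [NormedSpace ℝ X] [NormedSpace ℝ Y]

theorem accNorm_map_le (T : X →L[ℝ] Y) (hf : Continuous f) (ht : 0 ≤ t) :
    accNorm (fun τ => T (f τ)) t ≤ ‖T‖ * accNorm f t := by
  refine (accNorm_le_aInt (by fun_prop) (continuous_const.mul hf.norm) ht
    fun τ => T.le_opNorm (f τ)).trans_eq ?_
  exact intervalIntegral.integral_const_mul ‖T‖ fun τ => ‖f τ‖

theorem aInt_comp_sub (hf : Continuous f) (hc : Causal f) (hk : 0 ≤ k) (t : ℝ) :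
    aInt (fun τ => f (τ - k)) t = aInt f (t - k) := by
  have hpast : ∫ τ in -k..0, f τ = 0 := by
    refine (intervalIntegral.integral_congr fun τ hτ => hc τ ?_).trans
      intervalIntegral.integral_zero
    rw [Set.uIcc_of_le (by linarith)] at hτ
    exact hτ.2
  rw [aInt, intervalIntegral.integral_comp_sub_right, zero_sub,
    ← intervalIntegral.integral_add_adjacent_intervals (b := 0) (hf.intervalIntegrable _ _)
      (hf.intervalIntegrable _ _), hpast, zero_add, aInt]

theorem aInt_amean (hf : Continuous f) (hc : Causal f) (hk : 0 ≤ k) (t : ℝ) :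
    aInt (amean k f) t = amean k (aInt f) t := by
  have hs : Continuous fun τ => f (τ - k) := by fun_prop
  simp only [aInt, amean]
  rw [intervalIntegral.integral_smul, intervalIntegral.integral_add (hf.intervalIntegrable _ _)
    (hs.intervalIntegrable _ _)]
  exact congrArg (fun x => (2⁻¹ : ℝ) • (aInt f t + x)) (aInt_comp_sub hf hc hk t)

theorem aInt_dquot (hf : Continuous f) (hc : Causal f) (hk : 0 ≤ k) (t : ℝ) :
    aInt (dquot k f) t = dquot k (aInt f) t := by
  have hs : Continuous fun τ => f (τ - k) := by fun_prop
  simp only [aInt, dquot]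
  rw [intervalIntegral.integral_smul, intervalIntegral.integral_sub (hf.intervalIntegrable _ _)
    (hs.intervalIntegrable _ _)]
  exact congrArg (fun x => k⁻¹ • (aInt f t - x)) (aInt_comp_sub hf hc hk t)

protected theorem Causal.aInt (hc : Causal f) : Causal (aInt f) := by
  intro t ht
  refine (intervalIntegral.integral_congr fun τ hτ => hc τ ?_).trans
    intervalIntegral.integral_zero
  rw [Set.uIcc_of_ge ht] at hτ
  exact hτ.2

theorem steklov_le_of_monotone {u : ℝ → ℝ} (hu : Monotone u) (hk : 0 < k) (t : ℝ) :
    steklov k u t ≤ u t := by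
  have h : ∫ τ in (t - k)..t, u τ ≤ ∫ _ in (t - k)..t, u t :=
    intervalIntegral.integral_mono_on (by linarith) hu.intervalIntegrable
      intervalIntegrable_const fun τ hτ => hu hτ.2
  rw [intervalIntegral.integral_const, sub_sub_cancel, smul_eq_mul] at h
  rwa [steklov, smul_eq_mul, inv_mul_le_iff₀ hk]

theorem amean_le_of_monotone {u : ℝ → ℝ} (hu : Monotone u) (hk : 0 ≤ k) (t : ℝ) :
    amean k u t ≤ u t := by
  have h := hu (show t - k ≤ t by linarith)
  rw [amean, smul_eq_mul]
  linarith

theorem aInt_steklov_le {u : ℝ → ℝ} (hu : Continuous u) (hc : Causal u) (hnonneg : ∀ τ, 0 ≤ u τ)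
    (hk : 0 < k) (t : ℝ) : aInt (steklov k u) t ≤ aInt u t := by
  have haInt : Continuous (aInt u) := (contDiff_aInt (n := 0) (contDiff_zero.2 hu)).continuous
  rw [steklov_eq_dquot_aInt hu, aInt_dquot haInt hc.aInt hk.le, ← steklov_eq_dquot_aInt haInt]
  exact steklov_le_of_monotone (monotone_aInt hu hnonneg) hk t

theorem accNorm_amean_le (hf : Continuous f) (hc : Causal f) (hk : 0 ≤ k) (ht : 0 ≤ t) :
    accNorm (amean k f) t ≤ accNorm f t := by
  refine (accNorm_le_aInt (continuous_amean hf k) (continuous_amean hf.norm k) ht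
    (norm_amean_le k f)).trans ?_
  rw [aInt_amean hf.norm hc.norm hk]
  exact amean_le_of_monotone (monotone_accNorm hf) hk t

variable [CompleteSpace X]

theorem accNorm_steklov_le (hf : Continuous f) (hc : Causal f) (hk : 0 < k) (ht : 0 ≤ t) :
    accNorm (steklov k f) t ≤ accNorm f t :=
  (accNorm_le_aInt (continuous_steklov hf k) (continuous_steklov hf.norm k) ht
    (norm_steklov_le hk f)).trans (aInt_steklov_le hf.norm hc.norm (fun _ => norm_nonneg _) hk t)

theorem norm_le_accNorm_deriv (hf : ContDiff ℝ 1 f) (hc : Causal f) (ht : 0 ≤ t) :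
    ‖f t‖ ≤ accNorm (deriv f) t := by
  have hFTC : ∫ τ in (0 : ℝ)..t, deriv f τ = f t := by
    rw [intervalIntegral.integral_deriv_eq_sub (fun τ _ => hf.differentiable_one τ)
      (hf.continuous_deriv_one.intervalIntegrable _ _), hc 0 le_rfl, sub_zero]
  exact hFTC ▸ intervalIntegral.norm_integral_le_integral_norm ht

theorem accNorm_le_mul_accNorm_deriv (hf : ContDiff ℝ 1 f) (hc : Causal f) (ht : 0 ≤ t) :
    accNorm f t ≤ t * accNorm (deriv f) t := by
  have h : accNorm f t ≤ ∫ _ in (0 : ℝ)..t, accNorm (deriv f) t :=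
    intervalIntegral.integral_mono_on ht (hf.continuous.norm.intervalIntegrable _ _)
      intervalIntegrable_const fun τ hτ => (norm_le_accNorm_deriv hf hc hτ.1).trans
        (monotone_accNorm hf.continuous_deriv_one hτ.2)
  simpa using h

end AccumulatedNorm

section TrapezoidalRule

variable {X : Type*} [NormedAddCommGroup X] [NormedSpace ℝ X] [CompleteSpace X] {f : ℝ → X}
  {k t : ℝ}

theorem integral_trapezoid_kernel_smul (hf : ContDiff ℝ 2 f) (a b : ℝ) :
    ∫ τ in a..b, ((τ - a) * (b - τ) / 2) • iteratedDeriv 2 f τ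
      = ((b - a) / 2) • (f a + f b) - ∫ τ in a..b, f τ := by
  have hf' : Differentiable ℝ (deriv f) := hf.differentiable_deriv_two
  have hprim : ∀ τ, HasDerivAt
      (fun τ => ((τ - a) * (b - τ) / 2) • deriv f τ - ((a + b) / 2 - τ) • f τ)
      (((τ - a) * (b - τ) / 2) • iteratedDeriv 2 f τ + f τ) τ := by
    intro τ
    have hw : HasDerivAt (fun τ => (τ - a) * (b - τ) / 2) ((a + b) / 2 - τ) τ := by
      refine ((((hasDerivAt_id τ).sub_const a).mul
        ((hasDerivAt_id τ).const_sub b)).div_const 2).congr_deriv ?_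
      simp only [id_eq]
      ring
    have hw' : HasDerivAt (fun τ => (a + b) / 2 - τ) (-1) τ := (hasDerivAt_id τ).const_sub _
    refine ((hw.smul (hf' τ).hasDerivAt).sub
      (hw'.smul (hf.differentiable two_ne_zero τ).hasDerivAt)).congr_deriv ?_
    rw [iteratedDeriv_two]
    module
  have hker : Continuous fun τ => ((τ - a) * (b - τ) / 2) • iteratedDeriv 2 f τ :=
    Continuous.smul (by fun_prop) (hf.continuous_iteratedDeriv 2 le_rfl)
  have hFTC := intervalIntegral.integral_eq_sub_of_hasDerivAt (a := a) (b := b)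
    (fun τ _ => hprim τ) ((hker.add hf.continuous).intervalIntegrable _ _)
  rw [intervalIntegral.integral_add (hker.intervalIntegrable _ _)
    (hf.continuous.intervalIntegrable _ _)] at hFTC
  rw [eq_sub_of_add_eq hFTC]
  module

theorem norm_steklov_sub_amean_le (hf : ContDiff ℝ 2 f) (hk : 0 < k) (t : ℝ) :
    ‖steklov k f t - amean k f t‖ ≤ k ^ 2 / 8 * steklov k (fun τ => ‖iteratedDeriv 2 f τ‖) t := by
  have hrule := integral_trapezoid_kernel_smul hf (t - k) t
  have hdefect : steklov k f t - amean k f t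
      = -(k⁻¹ • ∫ τ in (t - k)..t, ((τ - (t - k)) * (t - τ) / 2) • iteratedDeriv 2 f τ) := by
    rw [hrule, sub_sub_cancel, steklov, amean, smul_sub, smul_smul]
    match_scalars <;> field_simp
  have hker : ∀ τ ∈ Set.Icc (t - k) t,
      ‖((τ - (t - k)) * (t - τ) / 2) • iteratedDeriv 2 f τ‖
        ≤ k ^ 2 / 8 * ‖iteratedDeriv 2 f τ‖ := by
    intro τ hτ
    have hnonneg : 0 ≤ (τ - (t - k)) * (t - τ) :=
      mul_nonneg (sub_nonneg.2 hτ.1) (sub_nonneg.2 hτ.2)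
    rw [norm_smul, Real.norm_of_nonneg (by positivity)]
    exact mul_le_mul_of_nonneg_right (by nlinarith [sq_nonneg ((τ - (t - k)) - (t - τ))])
      (norm_nonneg _)
  have hcont := hf.continuous_iteratedDeriv 2 le_rfl
  have hint := intervalIntegral.norm_integral_le_of_norm_le (sub_le_self t hk.le)
    (MeasureTheory.ae_of_all _ fun τ hτ => hker τ (Set.Ioc_subset_Icc_self hτ))
    ((continuous_const.mul hcont.norm).intervalIntegrable (μ := MeasureTheory.volume) _ _)
  rw [intervalIntegral.integral_const_mul (k ^ 2 / 8)] at hint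
  rw [hdefect, norm_neg, norm_smul, Real.norm_of_nonneg (inv_nonneg.2 hk.le), steklov, smul_eq_mul,
    mul_left_comm]
  exact mul_le_mul_of_nonneg_left hint (inv_nonneg.2 hk.le)

theorem accNorm_steklov_sub_amean_le (hf : ContDiff ℝ 2 f) (hc : Causal f) (hk : 0 < k)
    (ht : 0 ≤ t) :
    accNorm (fun τ => steklov k f τ - amean k f τ) t
      ≤ k ^ 2 / 8 * accNorm (iteratedDeriv 2 f) t := by
  have hf'' := hf.continuous_iteratedDeriv 2 le_rfl
  refine (accNorm_le_aInt ((continuous_steklov hf.continuous k).sub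
    (continuous_amean hf.continuous k)) (continuous_const.mul (continuous_steklov hf''.norm k)) ht
    (norm_steklov_sub_amean_le hf hk)).trans ?_
  refine (intervalIntegral.integral_const_mul (k ^ 2 / 8) _).trans_le ?_
  exact mul_le_mul_of_nonneg_left (aInt_steklov_le hf''.norm (hc.iteratedDeriv 2).norm
    (fun _ => norm_nonneg _) hk t) (by positivity)

theorem accNorm_trapDefect_le_mul_sq (hf : ContDiff ℝ 2 f) (hc : Causal f) (hk : 0 < k)
    (ht : 0 ≤ t) :
    accNorm (trapDefect k f) t ≤ k ^ 2 / 4 * accNorm (iteratedDeriv 2 f) t := by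
  have hS : Continuous (steklov k f) := continuous_steklov hf.continuous k
  have hα : ContDiff ℝ 2 (amean k f) := contDiff_amean (n := 2) hf k
  have hdefect : Continuous fun τ => steklov k f τ - amean k f τ := hS.sub hα.continuous
  have htelescope : ∀ τ, trapDefect k f τ = steklov k (fun s => steklov k f s - amean k f s) τ
      + (steklov k (amean k f) τ - amean k (amean k f) τ) := fun τ => by
    rw [steklov_sub hS hα.continuous, trapDefect]
    abel
  have hsplit := accNorm_le_add (contDiff_trapDefect (n := 2) hf k).continuous
    (continuous_steklov hdefect k)
    (h := fun τ => steklov k (amean k f) τ - amean k (amean k f) τ)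
    ((continuous_steklov hα.continuous k).sub (continuous_amean hα.continuous k)) ht
    fun τ => htelescope τ ▸ norm_add_le _ _
  have hfirst := (accNorm_steklov_le hdefect ((hc.steklov hk.le).sub (hc.amean hk.le)) hk ht).trans
    (accNorm_steklov_sub_amean_le hf hc hk ht)
  have hsecond := accNorm_steklov_sub_amean_le hα (hc.amean hk.le) hk ht
  rw [iteratedDeriv_amean (n := 2) hf] at hsecond
  have hmean := accNorm_amean_le (hf.continuous_iteratedDeriv 2 le_rfl) (hc.iteratedDeriv 2) hk.le
    ht
  nlinarith [mul_le_mul_of_nonneg_left hmean (sq_nonneg k)]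

theorem accNorm_trapDefect_le_two_mul (hf : Continuous f) (hc : Causal f) (hk : 0 < k)
    (ht : 0 ≤ t) : accNorm (trapDefect k f) t ≤ 2 * accNorm f t := by
  have hS := continuous_steklov hf k
  have hα := continuous_amean hf k
  have hsplit := accNorm_le_add (f := trapDefect k f)
    ((continuous_steklov hS k).sub (continuous_amean hα k)) (continuous_steklov hS k)
    (continuous_amean hα k) ht fun τ => norm_sub_le _ _
  have hsteklov := (accNorm_steklov_le hS (hc.steklov hk.le) hk ht).trans
    (accNorm_steklov_le hf hc hk ht)
  have hamean := (accNorm_amean_le hα (hc.amean hk.le) hk.le ht).trans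
    (accNorm_amean_le hf hc hk.le ht)
  linarith

theorem accNorm_trapDefect_le (hf : ContDiff ℝ 2 f) (hc : Causal f) (hk : 0 < k) (ht : 0 ≤ t) :
    accNorm (trapDefect k f) t ≤ 2 * (min k t) ^ 2 * accNorm (iteratedDeriv 2 f) t := by
  have hnonneg := accNorm_nonneg (iteratedDeriv 2 f) ht
  rcases le_total k t with hkt | htk
  · rw [min_eq_left hkt]
    exact (accNorm_trapDefect_le_mul_sq hf hc hk ht).trans
      (mul_le_mul_of_nonneg_right (by linarith [sq_nonneg k]) hnonneg)
  · have hpoincare := accNorm_le_mul_accNorm_deriv (hf.of_le one_le_two) hc ht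
    have hpoincare' := accNorm_le_mul_accNorm_deriv (contDiff_one_deriv hf) hc.deriv ht
    rw [← iteratedDeriv_two] at hpoincare'
    have htwo := accNorm_trapDefect_le_two_mul hf.continuous hc hk ht
    rw [min_eq_right htk]
    nlinarith [mul_le_mul_of_nonneg_left hpoincare' ht]

end TrapezoidalRule

section WeakSolution

variable {V H G : Type*} [NormedAddCommGroup V] [NormedSpace ℝ V]
  [NormedAddCommGroup H] [InnerProductSpace ℝ H] [NormedAddCommGroup G] [InnerProductSpace ℝ G]
  {i : V →L[ℝ] H} {D : V →L[ℝ] G} {f f₁ f₂ : ℝ → H} {g g₁ g₂ : ℝ → G} {v v₁ v₂ : ℝ → V} {k t : ℝ}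

/-- The causal function `v` solves `(i v)'' + D* D v = f + D* g` weakly; only `i v`, not `v`, is
assumed to be twice differentiable. -/
structure IsWeakSolution (i : V →L[ℝ] H) (D : V →L[ℝ] G) (f : ℝ → H) (g : ℝ → G) (v : ℝ → V) :
    Prop where
  continuous : Continuous v
  causal : Causal v
  contDiff : ContDiff ℝ 2 fun τ => i (v τ)
  weak_eq : ∀ t z, ⟪iteratedDeriv 2 (fun τ => i (v τ)) t, i z⟫ + ⟪D (v t), D z⟫
    = ⟪f t, i z⟫ + ⟪g t, D z⟫

protected theorem IsWeakSolution.sub (h₁ : IsWeakSolution i D f₁ g₁ v₁)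
    (h₂ : IsWeakSolution i D f₂ g₂ v₂) :
    IsWeakSolution i D (fun τ => f₁ τ - f₂ τ) (fun τ => g₁ τ - g₂ τ) fun τ => v₁ τ - v₂ τ where
  continuous := h₁.continuous.sub h₂.continuous
  causal := h₁.causal.sub h₂.causal
  contDiff := by simpa only [map_sub] using h₁.contDiff.sub h₂.contDiff
  weak_eq t z := by
    simp only [map_sub]
    rw [iteratedDeriv_fun_sub (n := 2) h₁.contDiff.contDiffAt h₂.contDiff.contDiffAt]
    simp only [inner_sub_left]
    linear_combination h₁.weak_eq t z - h₂.weak_eq t z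

protected theorem IsWeakSolution.amean (h : IsWeakSolution i D f g v) (hk : 0 ≤ k) :
    IsWeakSolution i D (amean k f) (amean k g) (amean k v) where
  continuous := continuous_amean h.continuous k
  causal := h.causal.amean hk
  contDiff := by
    simp only [map_amean]
    exact contDiff_amean (n := 2) h.contDiff k
  weak_eq t z := by
    simp only [map_amean]
    rw [iteratedDeriv_amean (n := 2) h.contDiff]
    simp only [amean, inner_smul_left, inner_add_left, RCLike.conj_to_real]
    linear_combination 2⁻¹ * (h.weak_eq t z + h.weak_eq (t - k) z)

protected theorem IsWeakSolution.dquot (h : IsWeakSolution i D f g v) (hk : 0 ≤ k) :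
    IsWeakSolution i D (dquot k f) (dquot k g) (dquot k v) where
  continuous := continuous_dquot h.continuous k
  causal := h.causal.dquot hk
  contDiff := by
    simp only [map_dquot]
    exact contDiff_dquot (n := 2) h.contDiff k
  weak_eq t z := by
    simp only [map_dquot]
    rw [iteratedDeriv_dquot (n := 2) h.contDiff]
    simp only [dquot, inner_smul_left, inner_sub_left, RCLike.conj_to_real]
    linear_combination k⁻¹ * (h.weak_eq t z - h.weak_eq (t - k) z)

theorem inner_steklov [CompleteSpace H] (hf : Continuous f) (k t : ℝ) (x : H) :
    ⟪steklov k f t, x⟫ = steklov k (fun τ => ⟪f τ, x⟫) t := by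
  simpa only [innerSL_apply_apply, real_inner_comm] using map_steklov (innerSL ℝ x) hf k t

/-- The energy norm `(‖(i v)'‖² + ‖D v‖²)^{1/2}` at time `t`. -/
def energyNorm (i : V →L[ℝ] H) (D : V →L[ℝ] G) (v : ℝ → V) (t : ℝ) : ℝ :=
  √(‖deriv (fun τ => i (v τ)) t‖ ^ 2 + ‖D (v t)‖ ^ 2)

theorem norm_deriv_le_energyNorm (i : V →L[ℝ] H) (D : V →L[ℝ] G) (v : ℝ → V) (t : ℝ) :
    ‖deriv (fun τ => i (v τ)) t‖ ≤ energyNorm i D v t :=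
  Real.le_sqrt_of_sq_le (le_add_of_nonneg_right (sq_nonneg _))

theorem norm_map_le_energyNorm (i : V →L[ℝ] H) (D : V →L[ℝ] G) (v : ℝ → V) (t : ℝ) :
    ‖D (v t)‖ ≤ energyNorm i D v t :=
  Real.le_sqrt_of_sq_le (le_add_of_nonneg_left (sq_nonneg _))

theorem IsWeakSolution.continuous_energyNorm (h : IsWeakSolution i D f g v) :
    Continuous (energyNorm i D v) := by
  have hv := h.continuous
  have hv' : Continuous (deriv fun τ => i (v τ)) := h.contDiff.continuous_deriv one_le_two
  unfold energyNorm
  fun_prop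

theorem IsWeakSolution.hasDerivAt_energy (h : IsWeakSolution i D f g v) (hv : ContDiff ℝ 1 v)
    (hg : ContDiff ℝ 1 g) (t : ℝ) :
    HasDerivAt (fun τ => energyNorm i D v τ ^ 2 - 2 * ⟪g τ, D (v τ)⟫)
      (2 * (⟪f t, deriv (fun τ => i (v τ)) t⟫ - ⟪deriv g t, D (v t)⟫)) t := by
  have hvt : HasDerivAt v (deriv v t) t := (hv.differentiable_one t).hasDerivAt
  have hDv : HasDerivAt (fun τ => D (v τ)) (D (deriv v t)) t := D.hasFDerivAt.comp_hasDerivAt t hvt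
  have hiv : deriv (fun τ => i (v τ)) t = i (deriv v t) :=
    (i.hasFDerivAt.comp_hasDerivAt t hvt).deriv
  have hiv' : HasDerivAt (deriv fun τ => i (v τ)) (iteratedDeriv 2 (fun τ => i (v τ)) t) t := by
    rw [iteratedDeriv_two]
    exact (h.contDiff.differentiable_deriv_two t).hasDerivAt
  have hgt : HasDerivAt g (deriv g t) t := (hg.differentiable_one t).hasDerivAt
  have hE := (hiv'.norm_sq.add hDv.norm_sq).sub ((hgt.inner ℝ hDv).const_mul 2)
  refine (hE.congr_deriv ?_).congr_of_eventuallyEq (.of_forall fun τ => ?_)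
  · rw [hiv, real_inner_comm (iteratedDeriv 2 _ t)]
    linear_combination 2 * h.weak_eq t (deriv v t)
  · simp only [energyNorm, Real.sq_sqrt (add_nonneg (sq_nonneg _) (sq_nonneg _))]
    rfl

variable [CompleteSpace G]

theorem IsWeakSolution.energyNorm_sq_le {M : ℝ} (h : IsWeakSolution i D f g v)
    (hv : ContDiff ℝ 1 v) (hf : Continuous f) (hg : ContDiff ℝ 1 g) (hgc : Causal g) (ht : 0 ≤ t)
    (hM : ∀ τ ∈ Set.Icc 0 t, energyNorm i D v τ ≤ M) :
    energyNorm i D v t ^ 2 ≤ 2 * M * (accNorm f t + 2 * accNorm (deriv g) t) := by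
  have hDv : Continuous fun τ => D (v τ) := D.continuous.comp h.continuous
  have hg' := hg.continuous_deriv_one
  have hq' : Continuous (deriv fun τ => i (v τ)) := h.contDiff.continuous_deriv one_le_two
  have hpower : ∀ τ ∈ Set.Icc 0 t,
      ‖2 * (⟪f τ, deriv (fun τ => i (v τ)) τ⟫ - ⟪deriv g τ, D (v τ)⟫)‖
        ≤ 2 * M * (‖f τ‖ + ‖deriv g τ‖) := fun τ hτ => by
    have hfM := (norm_inner_le_norm (𝕜 := ℝ) (f τ) _).trans (mul_le_mul_of_nonneg_left
      ((norm_deriv_le_energyNorm i D v τ).trans (hM τ hτ)) (norm_nonneg (f τ)))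
    have hgM := (norm_inner_le_norm (𝕜 := ℝ) (deriv g τ) _).trans (mul_le_mul_of_nonneg_left
      ((norm_map_le_energyNorm i D v τ).trans (hM τ hτ)) (norm_nonneg (deriv g τ)))
    rw [norm_mul, Real.norm_ofNat]
    linarith [norm_sub_le ⟪f τ, deriv (fun τ => i (v τ)) τ⟫ ⟪deriv g τ, D (v τ)⟫]
  have hwork := intervalIntegral.norm_integral_le_of_norm_le ht
    (MeasureTheory.ae_of_all _ fun τ hτ => hpower τ (Set.Ioc_subset_Icc_self hτ))
    ((continuous_const.mul (hf.norm.add hg'.norm)).intervalIntegrable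
      (μ := MeasureTheory.volume) _ _)
  have hinitial : energyNorm i D v 0 ^ 2 - 2 * ⟪g 0, D (v 0)⟫ = 0 := by
    simp [energyNorm, (h.causal.map i).deriv 0 le_rfl, h.causal 0 le_rfl]
  rw [intervalIntegral.integral_eq_sub_of_hasDerivAt (fun τ _ => h.hasDerivAt_energy hv hg τ)
    ((continuous_const.mul ((hf.inner hq').sub (hg'.inner hDv))).intervalIntegrable _ _),
    hinitial, sub_zero,
    intervalIntegral.integral_const_mul, intervalIntegral.integral_add
      (hf.norm.intervalIntegrable _ _) (hg'.norm.intervalIntegrable _ _)] at hwork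
  have hboundary : ⟪g t, D (v t)⟫ ≤ accNorm (deriv g) t * M :=
    (real_inner_le_norm _ _).trans (mul_le_mul (norm_le_accNorm_deriv hg hgc ht)
      ((norm_map_le_energyNorm i D v t).trans (hM t ⟨ht, le_rfl⟩)) (norm_nonneg _)
      (accNorm_nonneg _ ht))
  unfold accNorm at *
  linarith [(abs_le.1 hwork).2]

theorem IsWeakSolution.energyNorm_le (h : IsWeakSolution i D f g v) (hv : ContDiff ℝ 1 v)
    (hf : Continuous f) (hg : ContDiff ℝ 1 g) (hgc : Causal g) (ht : 0 ≤ t) :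
    energyNorm i D v t ≤ 2 * (accNorm f t + 2 * accNorm (deriv g) t) := by
  obtain ⟨s, hs, hmax⟩ := isCompact_Icc.exists_isMaxOn (Set.nonempty_Icc.2 ht)
    h.continuous_energyNorm.continuousOn
  have hsq := h.energyNorm_sq_le hv hf hg hgc hs.1 fun τ hτ => hmax ⟨hτ.1, hτ.2.trans hs.2⟩
  have hdata : accNorm f s + 2 * accNorm (deriv g) s ≤ accNorm f t + 2 * accNorm (deriv g) t :=
    add_le_add (monotone_accNorm hf hs.2)
      (mul_le_mul_of_nonneg_left (monotone_accNorm hg.continuous_deriv_one hs.2) zero_le_two)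
  refine (hmax ⟨ht, le_rfl⟩).trans ?_
  have hnonneg : 0 ≤ energyNorm i D v s := Real.sqrt_nonneg _
  by_contra! hlt
  nlinarith [accNorm_nonneg f ht, accNorm_nonneg (deriv g) ht]

variable [CompleteSpace V] [CompleteSpace H]

protected theorem IsWeakSolution.steklov (h : IsWeakSolution i D f g v) (hf : Continuous f)
    (hg : Continuous g) (hk : 0 ≤ k) :
    IsWeakSolution i D (steklov k f) (steklov k g) (steklov k v) where
  continuous := continuous_steklov h.continuous k
  causal := h.causal.steklov hk
  contDiff := by
    simp only [map_steklov i h.continuous]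
    exact contDiff_steklov (n := 2) h.contDiff k
  weak_eq t z := by
    have hq'' := h.contDiff.continuous_iteratedDeriv 2 le_rfl
    have hDv : Continuous fun τ => D (v τ) := D.continuous.comp h.continuous
    have havg := congrArg (fun u => steklov k u t) (funext fun τ => h.weak_eq τ z)
    rw [steklov_add (hq''.inner continuous_const) (hDv.inner continuous_const),
      steklov_add (hf.inner continuous_const) (hg.inner continuous_const),
      ← inner_steklov hq'', ← inner_steklov hf, ← inner_steklov hg,
      ← inner_steklov hDv, ← iteratedDeriv_steklov (n := 2) h.contDiff] at havg
    simpa only [map_steklov i h.continuous, map_steklov D h.continuous] using havg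

theorem IsWeakSolution.norm_deriv_le (h : IsWeakSolution i D f g v) (hf : Continuous f)
    (hfc : Causal f) (hg : ContDiff ℝ 1 g) (hgc : Causal g) (ht : 0 ≤ t) :
    ‖deriv (fun τ => i (v τ)) t‖ ≤ 2 * (accNorm f t + 2 * accNorm (deriv g) t) := by
  have hq : HasDerivAt (fun τ => i (v τ)) (deriv (fun τ => i (v τ)) t) t :=
    (h.contDiff.differentiable two_ne_zero t).hasDerivAt
  refine le_of_tendsto (tendsto_dquot hq).norm (eventually_mem_nhdsWithin.mono fun k hk => ?_)
  have hsmooth := (h.steklov hf hg.continuous (le_of_lt hk)).energyNorm_le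
    (contDiff_succ_steklov (n := 0) (contDiff_zero.2 h.continuous) k) (continuous_steklov hf k)
    (contDiff_steklov (n := 1) hg k) (hgc.steklov (le_of_lt hk)) ht
  have hderiv : deriv (fun τ => i (steklov k v τ)) t = dquot k (fun τ => i (v τ)) t := by
    simp only [map_steklov i h.continuous]
    exact congrFun (deriv_steklov h.contDiff.continuous k) t
  have hg' : accNorm (deriv (steklov k g)) t ≤ accNorm (deriv g) t := by
    rw [← iteratedDeriv_one, iteratedDeriv_steklov (n := 1) hg, iteratedDeriv_one]
    exact accNorm_steklov_le hg.continuous_deriv_one hgc.deriv hk ht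
  rw [← hderiv]
  linarith [norm_deriv_le_energyNorm i D (steklov k v) t, accNorm_steklov_le hf hfc hk ht]

theorem IsWeakSolution.norm_iteratedDeriv_two_le (h : IsWeakSolution i D f g v)
    (hf : ContDiff ℝ 1 f) (hfc : Causal f) (hg : ContDiff ℝ 2 g) (hgc : Causal g) (ht : 0 ≤ t) :
    ‖iteratedDeriv 2 (fun τ => i (v τ)) t‖
      ≤ 2 * (accNorm (deriv f) t + 2 * accNorm (iteratedDeriv 2 g) t) := by
  rw [iteratedDeriv_two, iteratedDeriv_two]
  have hq : HasDerivAt (deriv fun τ => i (v τ)) (deriv (deriv fun τ => i (v τ)) t) t :=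
    (h.contDiff.differentiable_deriv_two t).hasDerivAt
  refine le_of_tendsto (tendsto_dquot hq).norm (eventually_mem_nhdsWithin.mono fun k hk => ?_)
  have hrough := (h.dquot (le_of_lt hk)).norm_deriv_le (continuous_dquot hf.continuous k)
    (hfc.dquot (le_of_lt hk)) (contDiff_dquot (n := 1) (hg.of_le one_le_two) k)
    (hgc.dquot (le_of_lt hk)) ht
  have hderiv : deriv (fun τ => i (dquot k v τ)) = dquot k (deriv fun τ => i (v τ)) := by
    simp only [map_dquot, ← iteratedDeriv_one]
    exact iteratedDeriv_dquot (n := 1) (h.contDiff.of_le one_le_two) k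
  have hf' := accNorm_steklov_le hf.continuous_deriv_one hfc.deriv hk ht
  rw [steklov_deriv hf] at hf'
  have hg'' := accNorm_steklov_le (contDiff_one_deriv hg).continuous_deriv_one hgc.deriv.deriv hk ht
  rw [steklov_deriv (contDiff_one_deriv hg), ← iteratedDeriv_one (f := g),
    ← iteratedDeriv_dquot (n := 1) (hg.of_le one_le_two), iteratedDeriv_one, iteratedDeriv_one]
    at hg''
  rw [hderiv] at hrough
  linarith

protected theorem IsWeakSolution.trapDefect (h : IsWeakSolution i D f g v) (hf : Continuous f)
    (hg : Continuous g) (hk : 0 ≤ k) :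
    IsWeakSolution i D (trapDefect k f) (trapDefect k g) (trapDefect k v) :=
  ((h.steklov hf hg hk).steklov (continuous_steklov hf k) (continuous_steklov hg k) hk).sub
    ((h.amean hk).amean hk)

theorem IsWeakSolution.norm_trapDefect_iteratedDeriv_two_le (h : IsWeakSolution i D f g v)
    (hf : ContDiff ℝ 3 f) (hfc : Causal f) (hg : ContDiff ℝ 4 g) (hgc : Causal g) (hk : 0 < k)
    (ht : 0 ≤ t) :
    ‖trapDefect k (iteratedDeriv 2 fun τ => i (v τ)) t‖
      ≤ 4 * (min k t) ^ 2
        * (accNorm (iteratedDeriv 3 f) t + 2 * accNorm (iteratedDeriv 4 g) t) := by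
  have hstate : iteratedDeriv 2 (fun τ => i (trapDefect k v τ))
      = trapDefect k (iteratedDeriv 2 fun τ => i (v τ)) := by
    simp only [map_trapDefect i h.continuous]
    exact iteratedDeriv_trapDefect (n := 2) h.contDiff k
  have hf₁ : ContDiff ℝ 1 f := hf.of_le (by norm_num)
  have hg₂ : ContDiff ℝ 2 g := hg.of_le (by norm_num)
  have hbound := (h.trapDefect hf.continuous hg.continuous hk.le).norm_iteratedDeriv_two_le
    (contDiff_trapDefect (n := 1) hf₁ k) (hfc.trapDefect hk.le)
    (contDiff_trapDefect (n := 2) hg₂ k) (hgc.trapDefect hk.le) ht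
  have hf' := accNorm_trapDefect_le (contDiff_iteratedDeriv (m := 2) (n := 1) hf)
    (hfc.iteratedDeriv 1) hk ht
  have hg'' := accNorm_trapDefect_le (contDiff_iteratedDeriv (m := 2) (n := 2) hg)
    (hgc.iteratedDeriv 2) hk ht
  rw [← iteratedDeriv_trapDefect (n := 1) hf₁, iteratedDeriv_one, iteratedDeriv_iteratedDeriv]
    at hf'
  rw [← iteratedDeriv_trapDefect (n := 2) hg₂, iteratedDeriv_iteratedDeriv] at hg''
  rw [hstate] at hbound
  linarith

end WeakSolution

section DiscreteStability

variable {V H G : Type*} [NormedAddCommGroup V] [NormedSpace ℝ V]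
  [NormedAddCommGroup H] [InnerProductSpace ℝ H] [NormedAddCommGroup G] [InnerProductSpace ℝ G]
  {i : V →L[ℝ] H} {D : V →L[ℝ] G} {e : ℝ → V} {X : ℝ → H} {B k t : ℝ}

theorem causal_step_induction (hk : 0 < k) {p : ℝ → Prop} (hpast : ∀ t ≤ 0, p t)
    (hstep : ∀ t, 0 < t → p (t - k) → p t) (t : ℝ) : p t := by
  obtain ⟨n, hn⟩ := exists_nat_ge (t / k)
  rw [div_le_iff₀ hk] at hn
  induction n generalizing t with
  | zero => exact hpast t (by simpa using hn)
  | succ n ih =>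
    rcases le_or_gt t 0 with ht | ht
    · exact hpast t ht
    · exact hstep t ht (ih (t - k) (by push_cast at hn; linarith))

theorem real_inner_sub_add (x y : H) : ⟪x - y, x + y⟫ = ‖x‖ ^ 2 - ‖y‖ ^ 2 := by
  rw [inner_add_right, inner_sub_left, inner_sub_left, real_inner_comm x y,
    real_inner_self_eq_norm_sq, real_inner_self_eq_norm_sq]
  ring

/-- The discrete energy norm `(‖∂_k (i e)‖² + ‖D α_k e‖²)^{1/2}` at time `t`. -/
def discreteEnergyNorm (k : ℝ) (i : V →L[ℝ] H) (D : V →L[ℝ] G) (e : ℝ → V) (t : ℝ) : ℝ :=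
  √(‖dquot k (fun τ => i (e τ)) t‖ ^ 2 + ‖D (amean k e t)‖ ^ 2)

theorem norm_dquot_le_discreteEnergyNorm (k : ℝ) (i : V →L[ℝ] H) (D : V →L[ℝ] G) (e : ℝ → V)
    (t : ℝ) : ‖dquot k (fun τ => i (e τ)) t‖ ≤ discreteEnergyNorm k i D e t :=
  Real.le_sqrt_of_sq_le (le_add_of_nonneg_right (sq_nonneg _))

theorem discreteEnergyNorm_eq_zero (he : Causal e) (hk : 0 ≤ k) (ht : t ≤ 0) :
    discreteEnergyNorm k i D e t = 0 := by
  simp [discreteEnergyNorm, he.amean hk t ht, (he.map i).dquot hk t ht]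

/-- The trapezoidal-rule discretization `∂_k² (i e) + D* D α_k² e = X` in weak form. -/
def IsTrapezoidalSolution (k : ℝ) (i : V →L[ℝ] H) (D : V →L[ℝ] G) (X : ℝ → H) (e : ℝ → V) : Prop :=
  ∀ t z, ⟪dquot k (dquot k fun τ => i (e τ)) t, i z⟫ + ⟪D (amean k (amean k e) t), D z⟫
    = ⟪X t, i z⟫

theorem IsTrapezoidalSolution.energy_balance (h : IsTrapezoidalSolution k i D X e) (hk : 0 < k)
    (t : ℝ) :
    discreteEnergyNorm k i D e t ^ 2 - discreteEnergyNorm k i D e (t - k) ^ 2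
      = k * ⟪X t, dquot k (fun τ => i (e τ)) t + dquot k (fun τ => i (e τ)) (t - k)⟫ := by
  set q' := dquot k fun τ => i (e τ) with hq'
  set De := fun τ => D (amean k e τ) with hDe
  have hq'' : dquot k q' t = k⁻¹ • (q' t - q' (t - k)) := rfl
  have hDe_mean : D (amean k (amean k e) t) = (2⁻¹ : ℝ) • (De t + De (t - k)) := map_amean D k _ t
  have htest_mass : i ((2 * k)⁻¹ • (e t - e (t - k - k))) = (2⁻¹ : ℝ) • (q' t + q' (t - k)) := by
    simp only [hq', dquot, map_smul, map_sub]
    module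
  have htest_stiffness : D ((2 * k)⁻¹ • (e t - e (t - k - k))) = k⁻¹ • (De t - De (t - k)) := by
    simp only [hDe, amean, map_smul, map_sub, map_add]
    module
  have htest := h t ((2 * k)⁻¹ • (e t - e (t - k - k)))
  rw [← hq', hq'', hDe_mean, htest_mass, htest_stiffness] at htest
  rw [real_inner_smul_left, real_inner_smul_right, real_inner_smul_left, real_inner_smul_right,
    real_inner_smul_right, real_inner_sub_add, real_inner_comm (De t - De (t - k)),
    real_inner_sub_add] at htest
  simp only [discreteEnergyNorm, Real.sq_sqrt (add_nonneg (sq_nonneg _) (sq_nonneg _))]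
  field_simp at htest
  linarith

theorem IsTrapezoidalSolution.discreteEnergyNorm_le_add (h : IsTrapezoidalSolution k i D X e)
    (hk : 0 < k) (t : ℝ) :
    discreteEnergyNorm k i D e t ≤ discreteEnergyNorm k i D e (t - k) + k * ‖X t‖ := by
  have hε' : 0 ≤ discreteEnergyNorm k i D e (t - k) := Real.sqrt_nonneg _
  have hwork : ⟪X t, dquot k (fun τ => i (e τ)) t + dquot k (fun τ => i (e τ)) (t - k)⟫
      ≤ ‖X t‖ * (discreteEnergyNorm k i D e t + discreteEnergyNorm k i D e (t - k)) :=
    (real_inner_le_norm _ _).trans (mul_le_mul_of_nonneg_left ((norm_add_le _ _).trans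
      (add_le_add (norm_dquot_le_discreteEnergyNorm k i D e t)
        (norm_dquot_le_discreteEnergyNorm k i D e (t - k)))) (norm_nonneg _))
  have hbalance := h.energy_balance hk t
  have hkX := mul_le_mul_of_nonneg_left hwork hk.le
  by_contra! hlt
  nlinarith [mul_nonneg hk.le (norm_nonneg (X t))]

theorem IsTrapezoidalSolution.discreteEnergyNorm_le (h : IsTrapezoidalSolution k i D X e)
    (he : Causal e) (hk : 0 < k) (hB : 0 ≤ B) (hX : ∀ τ ∈ Set.Icc 0 t, ‖X τ‖ ≤ B * min k τ ^ 2)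
    {s : ℝ} (hst : s ≤ t) : discreteEnergyNorm k i D e s ≤ k * B * min k s * s := by
  induction s using causal_step_induction hk with
  | hpast s hs =>
    rw [discreteEnergyNorm_eq_zero he hk.le hs, min_eq_right (hs.trans hk.le), mul_assoc]
    exact mul_nonneg (mul_nonneg hk.le hB) (mul_self_nonneg s)
  | hstep s hs ih =>
    have hstep := h.discreteEnergyNorm_le_add hk s
    have hXs := mul_le_mul_of_nonneg_left (hX s ⟨hs.le, hst⟩) hk.le
    rcases le_total s k with hsk | hks
    · rw [min_eq_right hsk] at hXs ⊢
      rw [discreteEnergyNorm_eq_zero he hk.le (sub_nonpos.2 hsk)] at hstep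
      linarith
    · rw [min_eq_left hks] at hXs ⊢
      have hprev := (ih (by linarith)).trans (mul_le_mul_of_nonneg_right
        (mul_le_mul_of_nonneg_left (min_le_left k (s - k)) (mul_nonneg hk.le hB))
        (sub_nonneg.2 hks))
      linarith

theorem IsTrapezoidalSolution.norm_le (h : IsTrapezoidalSolution k i D X e) (he : Causal e)
    (hk : 0 < k) (hB : 0 ≤ B) (hX : ∀ τ ∈ Set.Icc 0 t, ‖X τ‖ ≤ B * min k τ ^ 2) {s : ℝ}
    (hst : s ≤ t) : ‖i (e s)‖ ≤ B * k ^ 2 * s ^ 2 := by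
  induction s using causal_step_induction hk with
  | hpast s hs => rw [he s hs, map_zero, norm_zero]; positivity
  | hstep s _ ih =>
    have henergy := (norm_dquot_le_discreteEnergyNorm k i D e s).trans
      (h.discreteEnergyNorm_le he hk hB hX hst)
    have hincrement : i (e s) = i (e (s - k)) + k • dquot k (fun τ => i (e τ)) s := by
      rw [dquot, smul_inv_smul₀ hk.ne', add_sub_cancel]
    have hstep := norm_add_le (i (e (s - k))) (k • dquot k (fun τ => i (e τ)) s)
    rw [← hincrement, norm_smul, Real.norm_of_nonneg hk.le] at hstep
    have hkenergy := mul_le_mul_of_nonneg_left henergy hk.le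
    rcases le_total s k with hsk | hks
    · rw [he (s - k) (sub_nonpos.2 hsk), map_zero, norm_zero] at hstep
      rw [min_eq_right hsk] at hkenergy
      linarith
    · rw [min_eq_left hks] at hkenergy
      have hprev := ih (by linarith)
      nlinarith [mul_nonneg (mul_nonneg hB (pow_nonneg hk.le 3)) (sub_nonneg.2 hks)]

end DiscreteStability

section AccumulatedDerivatives

variable {X Y Z : Type*} [NormedAddCommGroup X] [NormedSpace ℝ X] [NormedAddCommGroup Y]
  [NormedSpace ℝ Y] [NormedAddCommGroup Z] [NormedSpace ℝ Z] {f : ℝ → X} {g : ℝ → Y} {n : ℕ} {t : ℝ}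

theorem accNorm_iteratedDeriv_map_sub_map_le (T : X →L[ℝ] Z) (U : Y →L[ℝ] Z) (hf : ContDiff ℝ n f)
    (hg : ContDiff ℝ n g) (ht : 0 ≤ t) :
    accNorm (iteratedDeriv n fun τ => T (f τ) - U (g τ)) t
      ≤ ‖T‖ * accNorm (iteratedDeriv n f) t + ‖U‖ * accNorm (iteratedDeriv n g) t := by
  have hTf : ContDiff ℝ n fun τ => T (f τ) := T.contDiff.comp hf
  have hUg : ContDiff ℝ n fun τ => U (g τ) := U.contDiff.comp hg
  have hf' := hf.continuous_iteratedDeriv' n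
  have hg' := hg.continuous_iteratedDeriv' n
  have hderiv : (iteratedDeriv n fun τ => T (f τ) - U (g τ))
      = fun τ => T (iteratedDeriv n f τ) - U (iteratedDeriv n g τ) := by
    ext τ
    rw [iteratedDeriv_fun_sub hTf.contDiffAt hUg.contDiffAt, iteratedDeriv_clm_comp T hf,
      iteratedDeriv_clm_comp U hg]
  rw [hderiv]
  have hsplit := accNorm_le_add ((T.continuous.comp hf').sub (U.continuous.comp hg'))
    (T.continuous.comp hf') (U.continuous.comp hg') ht fun τ => norm_sub_le _ _
  exact hsplit.trans (add_le_add (accNorm_map_le T hf' ht) (accNorm_map_le U hg' ht))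

theorem Hfun_one_iteratedDeriv (n : ℕ) (f : ℝ → X) (t : ℝ) :
    Hfun 1 (iteratedDeriv n f) t
      = accNorm (iteratedDeriv n f) t + accNorm (iteratedDeriv (1 + n) f) t := by
  rw [Hfun, Finset.sum_range_succ, Finset.sum_range_one, iteratedDeriv_zero,
    iteratedDeriv_iteratedDeriv]
  rfl

theorem Hfun_iteratedDeriv_le (f : ℝ → X) {m p q : ℕ} (hmn : m + p ≤ n) (ht : 0 ≤ t) :
    Hfun m (iteratedDeriv (p + q) f) t ≤ Hfun n (iteratedDeriv q f) t := by
  have hshift : Hfun m (iteratedDeriv (p + q) f) t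
      = ∑ i ∈ (Finset.range (m + 1)).map (addRightEmbedding p),
        accNorm (iteratedDeriv i (iteratedDeriv q f)) t := by
    simp only [Finset.sum_map, addRightEmbedding_apply, iteratedDeriv_iteratedDeriv, Hfun, accNorm,
      add_assoc]
  rw [hshift]
  refine Finset.sum_le_sum_of_subset_of_nonneg (fun i hi => ?_) fun i _ _ => accNorm_nonneg _ ht
  obtain ⟨j, hj, rfl⟩ := Finset.mem_map.1 hi
  rw [addRightEmbedding_apply]
  exact Finset.mem_range.2 (by linarith [Finset.mem_range.1 hj])

theorem Hfun_nonneg (n : ℕ) (f : ℝ → X) (ht : 0 ≤ t) : 0 ≤ Hfun n f t :=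
  Finset.sum_nonneg fun j _ => accNorm_nonneg (iteratedDeriv j f) ht

theorem monotone_Hfun (hf : ContDiff ℝ n f) : Monotone (Hfun n f) := fun _ _ hst =>
  Finset.sum_le_sum fun j hj => monotone_accNorm (hf.continuous_iteratedDeriv j
    (mod_cast Finset.mem_range_succ_iff.1 hj)) hst

end AccumulatedDerivatives

section WaveSystem

variable {W H G Hp Hm : Type*} [NormedAddCommGroup W] [NormedSpace ℝ W]
  [NormedAddCommGroup H] [InnerProductSpace ℝ H] [NormedAddCommGroup G] [InnerProductSpace ℝ G]
  [NormedAddCommGroup Hp] [NormedSpace ℝ Hp] [NormedAddCommGroup Hm] [NormedSpace ℝ Hm]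
  {β0 : ℝ → Hp} {β1 : ℝ → Hm} {y yk : ℝ → W} {k t : ℝ}

/-- The data of the variational wave problem: find `y` with `y - L β₀ ∈ V` and
`⟪(M y)'', M z⟫ + ⟪A y, A z⟫ = ⟪P β₁, M z⟫ + ⟪Q β₁, A z⟫` for all `z ∈ V`, where `M, A, V, L, P, Q`
are the fields in this order. Constrained Dirichlet data enter through the lifting `L`. -/
structure WaveSystem (W H G Hp Hm : Type*) [NormedAddCommGroup W] [NormedSpace ℝ W]
    [NormedAddCommGroup H] [InnerProductSpace ℝ H] [NormedAddCommGroup G] [InnerProductSpace ℝ G]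
    [NormedAddCommGroup Hp] [NormedSpace ℝ Hp] [NormedAddCommGroup Hm] [NormedSpace ℝ Hm] where
  mass : W →L[ℝ] H
  stiffness : W →L[ℝ] G
  trial : Submodule ℝ W
  lift : Hp →L[ℝ] W
  massLoad : Hm →L[ℝ] H
  stiffnessLoad : Hm →L[ℝ] G

namespace WaveSystem

/-- A causal solution in continuous time, only `M y` being twice differentiable. -/
structure IsSolution (S : WaveSystem W H G Hp Hm) (β0 : ℝ → Hp) (β1 : ℝ → Hm) (y : ℝ → W) :
    Prop where
  continuous : Continuous y
  causal : Causal y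
  contDiff : ContDiff ℝ 2 fun τ => S.mass (y τ)
  sub_lift_mem : ∀ t, y t - S.lift (β0 t) ∈ S.trial
  weak_eq : ∀ t, ∀ z ∈ S.trial,
    ⟪iteratedDeriv 2 (fun τ => S.mass (y τ)) t, S.mass z⟫ + ⟪S.stiffness (y t), S.stiffness z⟫
      = ⟪S.massLoad (β1 t), S.mass z⟫ + ⟪S.stiffnessLoad (β1 t), S.stiffness z⟫

/-- A causal solution of the trapezoidal-rule discretization, where `∂_k²` replaces the second
derivative and `α_k²` is applied to all other terms. -/
structure IsDiscreteSolution (S : WaveSystem W H G Hp Hm) (k : ℝ) (β0 : ℝ → Hp) (β1 : ℝ → Hm)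
    (y : ℝ → W) : Prop where
  causal : Causal y
  sub_lift_mem : ∀ t, y t - S.lift (β0 t) ∈ S.trial
  weak_eq : ∀ t, ∀ z ∈ S.trial,
    ⟪dquot k (dquot k fun τ => S.mass (y τ)) t, S.mass z⟫
        + ⟪S.stiffness (amean k (amean k y) t), S.stiffness z⟫
      = ⟪S.massLoad (amean k (amean k β1) t), S.mass z⟫
        + ⟪S.stiffnessLoad (amean k (amean k β1) t), S.stiffness z⟫

variable {S : WaveSystem W H G Hp Hm}

theorem IsSolution.weak_eq_closure (h : S.IsSolution β0 β1 y) (t : ℝ) {z : W}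
    (hz : z ∈ S.trial.topologicalClosure) :
    ⟪iteratedDeriv 2 (fun τ => S.mass (y τ)) t, S.mass z⟫ + ⟪S.stiffness (y t), S.stiffness z⟫
      = ⟪S.massLoad (β1 t), S.mass z⟫ + ⟪S.stiffnessLoad (β1 t), S.stiffness z⟫ := by
  have hclosed : IsClosed {z | ⟪iteratedDeriv 2 (fun τ => S.mass (y τ)) t, S.mass z⟫
      + ⟪S.stiffness (y t), S.stiffness z⟫
      = ⟪S.massLoad (β1 t), S.mass z⟫ + ⟪S.stiffnessLoad (β1 t), S.stiffness z⟫} :=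
    isClosed_eq (by fun_prop) (by fun_prop)
  exact closure_minimal (fun z hz => h.weak_eq t z hz) hclosed hz

theorem IsSolution.iteratedDeriv_two_mass_sub_lift (h : S.IsSolution β0 β1 y)
    (hβ0 : ContDiff ℝ 2 β0) :
    iteratedDeriv 2 (fun τ => S.mass (y τ - S.lift (β0 τ)))
      = fun τ => iteratedDeriv 2 (fun τ => S.mass (y τ)) τ
        - (S.mass ∘L S.lift) (iteratedDeriv 2 β0 τ) := by
  have hlift : ContDiff ℝ 2 fun τ => S.mass (S.lift (β0 τ)) :=
    (S.mass ∘L S.lift).contDiff.comp hβ0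
  ext τ
  simp only [map_sub]
  rw [iteratedDeriv_fun_sub (n := 2) h.contDiff.contDiffAt hlift.contDiffAt]
  exact congrArg _ (congrFun (iteratedDeriv_clm_comp (n := 2) (S.mass ∘L S.lift) hβ0) τ)

/-- The solution with its Dirichlet lifting subtracted, in the closure of the trial space (which,
unlike the trial space itself, is complete). -/
def homogenized (h : S.IsSolution β0 β1 y) (t : ℝ) : S.trial.topologicalClosure :=
  ⟨y t - S.lift (β0 t), S.trial.le_topologicalClosure (h.sub_lift_mem t)⟩

theorem IsSolution.isWeakSolution_homogenized (h : S.IsSolution β0 β1 y) (hβ0 : ContDiff ℝ 2 β0)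
    (hβ0c : Causal β0) :
    IsWeakSolution (S.mass ∘L S.trial.topologicalClosure.subtypeL)
      (S.stiffness ∘L S.trial.topologicalClosure.subtypeL)
      (fun τ => S.massLoad (β1 τ) - (S.mass ∘L S.lift) (iteratedDeriv 2 β0 τ))
      (fun τ => S.stiffnessLoad (β1 τ) - (S.stiffness ∘L S.lift) (β0 τ)) (homogenized h) where
  continuous := (h.continuous.sub (S.lift.continuous.comp hβ0.continuous)).subtype_mk _
  causal t ht := Subtype.ext (h.causal.sub (hβ0c.map S.lift) t ht)
  contDiff := by
    simp only [ContinuousLinearMap.comp_apply, Submodule.subtypeL_apply, homogenized, map_sub]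
    exact h.contDiff.sub ((S.mass ∘L S.lift).contDiff.comp hβ0)
  weak_eq t z := by
    simp only [ContinuousLinearMap.comp_apply, Submodule.subtypeL_apply, homogenized]
    rw [h.iteratedDeriv_two_mass_sub_lift hβ0]
    simp only [map_sub, inner_sub_left, ContinuousLinearMap.comp_apply]
    linear_combination h.weak_eq_closure t z.2

/-- The constant of the error estimate, built from the norms of the data operators. -/
def errorConst (S : WaveSystem W H G Hp Hm) : ℝ :=
  6 * ‖S.mass ∘L S.lift‖ + 8 * ‖S.stiffness ∘L S.lift‖ + 4 * ‖S.massLoad‖ + 8 * ‖S.stiffnessLoad‖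

theorem errorConst_nonneg (S : WaveSystem W H G Hp Hm) : 0 ≤ S.errorConst := by
  unfold errorConst; positivity

variable [CompleteSpace H]

theorem norm_trapDefect_lift_le (S : WaveSystem W H G Hp Hm) (hβ0 : ContDiff ℝ 5 β0)
    (hβ0c : Causal β0) (hk : 0 < k) (ht : 0 ≤ t) :
    ‖trapDefect k (fun τ => (S.mass ∘L S.lift) (iteratedDeriv 2 β0 τ)) t‖
      ≤ 2 * (min k t) ^ 2 * (‖S.mass ∘L S.lift‖ * accNorm (iteratedDeriv 5 β0) t) := by
  set a := S.mass ∘L S.lift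
  have ha : ContDiff ℝ 3 fun τ => a (iteratedDeriv 2 β0 τ) :=
    a.contDiff.comp (contDiff_iteratedDeriv (m := 3) (n := 2) hβ0)
  have hac : Causal fun τ => a (iteratedDeriv 2 β0 τ) := (hβ0c.iteratedDeriv 2).map a
  have ha₁ : ContDiff ℝ 1 fun τ => a (iteratedDeriv 2 β0 τ) := ha.of_le (by norm_num)
  have hvalue := norm_le_accNorm_deriv (contDiff_trapDefect (n := 1) ha₁ k)
    (hac.trapDefect hk.le) ht
  rw [← iteratedDeriv_one, iteratedDeriv_trapDefect (n := 1) ha₁] at hvalue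
  have hdefect := accNorm_trapDefect_le (contDiff_iteratedDeriv (m := 2) (n := 1) ha)
    (hac.iteratedDeriv 1) hk ht
  rw [iteratedDeriv_iteratedDeriv,
    iteratedDeriv_clm_comp (n := 3) a (contDiff_iteratedDeriv (m := 3) (n := 2) hβ0),
    iteratedDeriv_iteratedDeriv] at hdefect
  exact (hvalue.trans hdefect).trans (mul_le_mul_of_nonneg_left
    (accNorm_map_le a (hβ0.continuous_iteratedDeriv' 5) ht) (by positivity))

theorem IsSolution.isTrapezoidalSolution_sub (h : S.IsSolution β0 β1 y)
    (hd : S.IsDiscreteSolution k β0 β1 yk) :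
    IsTrapezoidalSolution k (S.mass ∘L S.trial.subtypeL) (S.stiffness ∘L S.trial.subtypeL)
      (trapDefect k (iteratedDeriv 2 fun τ => S.mass (y τ)))
      fun τ => ⟨y τ - yk τ, by
        simpa using S.trial.sub_mem (h.sub_lift_mem τ) (hd.sub_lift_mem τ)⟩ := by
  intro t z
  have hcont (s : ℝ) := h.weak_eq s z z.2
  have haverage : ⟪amean k (amean k (iteratedDeriv 2 fun τ => S.mass (y τ))) t, S.mass z⟫
      + ⟪S.stiffness (amean k (amean k y) t), S.stiffness z⟫
      = ⟪S.massLoad (amean k (amean k β1) t), S.mass z⟫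
        + ⟪S.stiffnessLoad (amean k (amean k β1) t), S.stiffness z⟫ := by
    simp only [amean, map_add, map_smul, inner_add_left, real_inner_smul_left]
    linear_combination (hcont t + 2 * hcont (t - k) + hcont (t - k - k)) / 4
  have hdiscrete := hd.weak_eq t z z.2
  rw [← dquot_dquot_sub_amean_amean h.contDiff]
  simp only [dquot, amean, map_add, map_sub, map_smul, ContinuousLinearMap.comp_apply,
    Submodule.subtypeL_apply, inner_add_left, inner_sub_left, real_inner_smul_left]
    at haverage hdiscrete ⊢
  linear_combination haverage - hdiscrete

variable [CompleteSpace W] [CompleteSpace G]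

theorem IsSolution.norm_trapDefect_homogenized_le (h : S.IsSolution β0 β1 y)
    (hβ0 : ContDiff ℝ 5 β0) (hβ0c : Causal β0) (hβ1 : ContDiff ℝ 4 β1) (hβ1c : Causal β1)
    (hk : 0 < k) (ht : 0 ≤ t) :
    ‖trapDefect k (iteratedDeriv 2 fun τ => S.mass (y τ - S.lift (β0 τ))) t‖
      ≤ 4 * (min k t) ^ 2
        * ((‖S.massLoad‖ * accNorm (iteratedDeriv 3 β1) t
            + ‖S.mass ∘L S.lift‖ * accNorm (iteratedDeriv 5 β0) t)
          + 2 * (‖S.stiffnessLoad‖ * accNorm (iteratedDeriv 4 β1) t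
            + ‖S.stiffness ∘L S.lift‖ * accNorm (iteratedDeriv 4 β0) t)) := by
  have hβ0₂ : ContDiff ℝ 2 β0 := hβ0.of_le (by norm_num)
  have hβ0₄ : ContDiff ℝ 4 β0 := hβ0.of_le (by norm_num)
  have hβ0'' : ContDiff ℝ 3 (iteratedDeriv 2 β0) := contDiff_iteratedDeriv (m := 3) (n := 2) hβ0
  have hβ1₃ : ContDiff ℝ 3 β1 := hβ1.of_le (by norm_num)
  have hf := accNorm_iteratedDeriv_map_sub_map_le (n := 3) S.massLoad (S.mass ∘L S.lift) hβ1₃ hβ0''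
    ht
  have hg := accNorm_iteratedDeriv_map_sub_map_le (n := 4) S.stiffnessLoad (S.stiffness ∘L S.lift)
    hβ1 hβ0₄ ht
  rw [iteratedDeriv_iteratedDeriv] at hf
  refine ((h.isWeakSolution_homogenized hβ0₂ hβ0c).norm_trapDefect_iteratedDeriv_two_le
    ((S.massLoad.contDiff.comp hβ1₃).sub ((S.mass ∘L S.lift).contDiff.comp hβ0''))
    ((hβ1c.map S.massLoad).sub ((hβ0c.iteratedDeriv 2).map _))
    ((S.stiffnessLoad.contDiff.comp hβ1).sub ((S.stiffness ∘L S.lift).contDiff.comp hβ0₄))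
    ((hβ1c.map S.stiffnessLoad).sub (hβ0c.map _)) hk ht).trans ?_
  gcongr

theorem IsSolution.norm_trapDefect_le (h : S.IsSolution β0 β1 y) (hβ0 : ContDiff ℝ 5 β0)
    (hβ0c : Causal β0) (hβ1 : ContDiff ℝ 4 β1) (hβ1c : Causal β1) (hk : 0 < k) (ht : 0 ≤ t) :
    ‖trapDefect k (iteratedDeriv 2 fun τ => S.mass (y τ)) t‖
      ≤ S.errorConst * (Hfun 1 (iteratedDeriv 4 β0) t + Hfun 1 (iteratedDeriv 3 β1) t)
        * (min k t) ^ 2 := by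
  set a := S.mass ∘L S.lift
  set d := S.stiffness ∘L S.lift
  have hβ0₂ : ContDiff ℝ 2 β0 := hβ0.of_le (by norm_num)
  have hstate : Continuous (iteratedDeriv 2 fun τ => S.mass (y τ - S.lift (β0 τ))) :=
    (h.isWeakSolution_homogenized hβ0₂ hβ0c).contDiff.continuous_iteratedDeriv' 2
  have hlift : Continuous fun τ => a (iteratedDeriv 2 β0 τ) :=
    a.continuous.comp (hβ0₂.continuous_iteratedDeriv' 2)
  have hsplit : trapDefect k (iteratedDeriv 2 fun τ => S.mass (y τ)) t
      = trapDefect k (iteratedDeriv 2 fun τ => S.mass (y τ - S.lift (β0 τ))) t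
        + trapDefect k (fun τ => a (iteratedDeriv 2 β0 τ)) t := by
    rw [← trapDefect_add hstate hlift]
    simp only [h.iteratedDeriv_two_mass_sub_lift hβ0₂, a, sub_add_cancel]
  have hA4 := accNorm_nonneg (iteratedDeriv 4 β0) ht
  have hA5 := accNorm_nonneg (iteratedDeriv 5 β0) ht
  have hB3 := accNorm_nonneg (iteratedDeriv 3 β1) ht
  have hB4 := accNorm_nonneg (iteratedDeriv 4 β1) ht
  have hweights : 6 * ‖a‖ * accNorm (iteratedDeriv 5 β0) t
      + 8 * ‖d‖ * accNorm (iteratedDeriv 4 β0) t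
      + 4 * ‖S.massLoad‖ * accNorm (iteratedDeriv 3 β1) t
      + 8 * ‖S.stiffnessLoad‖ * accNorm (iteratedDeriv 4 β1) t
      ≤ S.errorConst * (Hfun 1 (iteratedDeriv 4 β0) t + Hfun 1 (iteratedDeriv 3 β1) t) := by
    rw [Hfun_one_iteratedDeriv, Hfun_one_iteratedDeriv, errorConst, add_mul, add_mul, add_mul]
    gcongr <;> linarith
  rw [hsplit]
  refine (norm_add_le_of_le (h.norm_trapDefect_homogenized_le hβ0 hβ0c hβ1 hβ1c hk ht)
    (S.norm_trapDefect_lift_le hβ0 hβ0c hk ht)).trans ?_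
  linarith [mul_le_mul_of_nonneg_right hweights (sq_nonneg (min k t))]

theorem IsSolution.norm_mass_sub_le (h : S.IsSolution β0 β1 y)
    (hd : S.IsDiscreteSolution k β0 β1 yk) (hβ0 : ContDiff ℝ 5 β0)
    (hβ0c : Causal β0) (hβ1 : ContDiff ℝ 4 β1) (hβ1c : Causal β1) (hk : 0 < k) (ht : 0 ≤ t) :
    ‖S.mass (y t - yk t)‖
      ≤ S.errorConst * (Hfun 1 (iteratedDeriv 4 β0) t + Hfun 1 (iteratedDeriv 3 β1) t)
        * k ^ 2 * t ^ 2 := by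
  have hβ0' := monotone_Hfun (n := 1) (contDiff_iteratedDeriv (m := 1) (n := 4) hβ0)
  have hβ1' := monotone_Hfun (n := 1) (contDiff_iteratedDeriv (m := 1) (n := 3) hβ1)
  refine (h.isTrapezoidalSolution_sub hd).norm_le
    (fun τ hτ => Subtype.ext (h.causal.sub hd.causal τ hτ)) hk
    (mul_nonneg S.errorConst_nonneg (add_nonneg (Hfun_nonneg 1 _ ht) (Hfun_nonneg 1 _ ht)))
    (fun τ hτ => ?_) le_rfl
  refine (h.norm_trapDefect_le hβ0 hβ0c hβ1 hβ1c hk hτ.1).trans ?_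
  gcongr
  exacts [S.errorConst_nonneg, hβ0' hτ.2, hβ1' hτ.2]

end WaveSystem

end WaveSystem

section HilbertEmbeddings

variable {𝕜 E F Y : Type*} [RCLike 𝕜] [NormedAddCommGroup E] [NormedSpace 𝕜 E] [CompleteSpace E]
  [NormedAddCommGroup F] [NormedSpace 𝕜 F] [CompleteSpace F] [NormedAddCommGroup Y]
  [InnerProductSpace 𝕜 Y] [CompleteSpace Y] {J : E →L[𝕜] Y} {C : NNReal}

theorem hasLeftInverse_of_antilipschitz (hJ : AntilipschitzWith C J) : J.HasLeftInverse := by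
  have hclosed : IsClosed (Set.range J) := hJ.isClosed_range J.uniformContinuous
  have : CompleteSpace J.range := hclosed.completeSpace_coe
  exact .of_injective_of_isClosed_range_of_closedComplement_range hJ.injective hclosed
    ⟨J.range.orthogonalProjectionOnto, J.range.orthogonalProjectionOnto_mem_subspace_eq_self⟩

theorem closedComplemented_of_antilipschitz (hJ : AntilipschitzWith C J) {p : Submodule 𝕜 E}
    (hp : IsClosed (p : Set E)) : p.ClosedComplemented := by
  have : CompleteSpace p := hp.completeSpace_coe
  have hrestrict : (J ∘L p.subtypeL).HasLeftInverse :=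
    hasLeftInverse_of_antilipschitz (hJ.comp p.subtypeₗᵢ.antilipschitz)
  exact ⟨hrestrict.leftInverse ∘L J, hrestrict.leftInverse_leftInverse⟩

theorem hasRightInverse_of_surjective_of_closedComplemented_ker {S : E →L[𝕜] F}
    (hS : Function.Surjective S) (hker : S.ker.ClosedComplemented) : S.HasRightInverse := by
  obtain ⟨p, hp⟩ := hker
  have hpsurj : Function.Surjective p := fun x => ⟨x, hp x⟩
  have : CompleteSpace S.ker := S.isClosed_ker.completeSpace_coe
  let e := S.equivProdOfSurjectiveOfIsCompl p (LinearMap.range_eq_top.2 hS)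
    (LinearMap.range_eq_top.2 hpsurj) (LinearMap.isCompl_of_proj hp)
  refine ⟨e.symm ∘L ContinuousLinearMap.inl 𝕜 F S.ker, fun y => ?_⟩
  exact congrArg Prod.fst (e.apply_symm_apply (y, 0))

theorem hasRightInverse_of_surjective_of_antilipschitz (hJ : AntilipschitzWith C J) {S : E →L[𝕜] F}
    (hS : Function.Surjective S) : S.HasRightInverse :=
  hasRightInverse_of_surjective_of_closedComplemented_ker hS
    (closedComplemented_of_antilipschitz hJ S.isClosed_ker)

theorem exists_inner_eq_of_hasLeftInverse {E Y : Type*} [NormedAddCommGroup E] [NormedSpace ℝ E]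
    [NormedAddCommGroup Y] [InnerProductSpace ℝ Y] [CompleteSpace Y] {J : E →L[ℝ] Y}
    (hJ : J.HasLeftInverse) : ∃ R : StrongDual ℝ E →L[ℝ] Y, ∀ ℓ x, ⟪R ℓ, J x⟫ = ℓ x := by
  let riesz : StrongDual ℝ Y →L[ℝ] Y :=
    (InnerProductSpace.toDual ℝ Y).symm.toContinuousLinearEquiv.toContinuousLinearMap
  refine ⟨riesz ∘L (ContinuousLinearMap.compL ℝ Y E ℝ).flip hJ.leftInverse, fun ℓ x => ?_⟩
  change ⟪(InnerProductSpace.toDual ℝ Y).symm (ℓ ∘L hJ.leftInverse), J x⟫ = ℓ x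
  rw [InnerProductSpace.toDual_symm_apply, ContinuousLinearMap.comp_apply,
    hJ.leftInverse_leftInverse]

end HilbertEmbeddings

section L2Product

variable {E F G : Type*} [NormedAddCommGroup E] [NormedSpace ℝ E]
  [NormedAddCommGroup F] [InnerProductSpace ℝ F] [NormedAddCommGroup G] [InnerProductSpace ℝ G]

/-- The pairing `x ↦ (S x, T x)` into the Hilbert (rather than sup-norm) product of `F` and `G`. -/
def l2Pair (S : E →L[ℝ] F) (T : E →L[ℝ] G) : E →L[ℝ] WithLp 2 (F × G) :=
  (WithLp.prodContinuousLinearEquiv 2 ℝ F G).symm ∘L S.prod T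

theorem inner_l2Pair_right (S : E →L[ℝ] F) (T : E →L[ℝ] G) (y : WithLp 2 (F × G)) (x : E) :
    ⟪y, l2Pair S T x⟫ = ⟪y.fst, S x⟫ + ⟪y.snd, T x⟫ :=
  WithLp.prod_inner_apply y _

theorem norm_l2Pair_sq (S : E →L[ℝ] F) (T : E →L[ℝ] G) (x : E) :
    ‖l2Pair S T x‖ ^ 2 = ‖S x‖ ^ 2 + ‖T x‖ ^ 2 :=
  WithLp.prod_norm_sq_eq_of_L2 _

theorem le_sqrt_inv_mul_of_mul_sq_le {a b c : ℝ} (hc : 0 < c) (hb : 0 ≤ b)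
    (h : c * a ^ 2 ≤ b ^ 2) : a ≤ √c⁻¹ * b := by
  refine (abs_le_of_sq_le_sq' ?_ (by positivity)).2
  rw [mul_pow, Real.sq_sqrt (by positivity)]
  exact (le_inv_mul_iff₀ hc).2 h

theorem antilipschitzWith_l2Pair {S : E →L[ℝ] F} {T : E →L[ℝ] G} {c : ℝ} (hc : 0 < c)
    (h : ∀ x, c * ‖x‖ ^ 2 ≤ ‖S x‖ ^ 2 + ‖T x‖ ^ 2) :
    AntilipschitzWith (√c⁻¹).toNNReal (l2Pair S T) :=
  (l2Pair S T).antilipschitz_of_bound fun x => by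
    rw [Real.coe_toNNReal _ (Real.sqrt_nonneg _)]
    exact le_sqrt_inv_mul_of_mul_sq_le hc (norm_nonneg _) (norm_l2Pair_sq S T x ▸ h x)

end L2Product

section CoupledSystem

variable {L2Ω L2Ωv L2s L2sv Hp Hm H1Ω H1s Hdiv : Type*}
  [NormedAddCommGroup L2Ω] [InnerProductSpace ℝ L2Ω]
  [NormedAddCommGroup L2Ωv] [InnerProductSpace ℝ L2Ωv]
  [NormedAddCommGroup L2s] [InnerProductSpace ℝ L2s]
  [NormedAddCommGroup L2sv] [InnerProductSpace ℝ L2sv]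
  [NormedAddCommGroup Hp] [NormedSpace ℝ Hp] [NormedAddCommGroup Hm] [NormedSpace ℝ Hm]
  [NormedAddCommGroup H1Ω] [NormedSpace ℝ H1Ω] [NormedAddCommGroup H1s] [NormedSpace ℝ H1s]
  [NormedAddCommGroup Hdiv] [NormedSpace ℝ Hdiv]
  {ι : H1Ω →L[ℝ] L2Ω} {grad : H1Ω →L[ℝ] L2Ωv} {γ : H1Ω →L[ℝ] Hp}
  {ιs : H1s →L[ℝ] L2s} {grads : H1s →L[ℝ] L2sv} {γm γp : H1s →L[ℝ] Hp}
  {ιdiv : Hdiv →L[ℝ] L2sv} {divs : Hdiv →L[ℝ] L2s} {γνm γνp : Hdiv →L[ℝ] Hm}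
  {dpair : Hm →L[ℝ] Hp →L[ℝ] ℝ} {cinv cinv2 : L2Ω →L[ℝ] L2Ω} {kap khalf : L2Ωv →L[ℝ] L2Ωv}
  {R : Hp →L[ℝ] H1s} {p : Hm →L[ℝ] L2Ω} {q : Hm →L[ℝ] L2Ωv}
  {Uh : Submodule ℝ H1Ω} {Xh : Submodule ℝ Hm} {Yh : Submodule ℝ Hp}

theorem exists_common_rightInverse [CompleteSpace L2s] [CompleteSpace L2sv] [CompleteSpace Hp]
    [CompleteSpace H1s] (hnorm : ∀ u : H1s, ‖u‖ ^ 2 = ‖ιs u‖ ^ 2 + ‖grads u‖ ^ 2)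
    (hsurj : ∀ a b : Hp, ∃ w : H1s, γm w = a ∧ γp w = b) :
    ∃ R : Hp →L[ℝ] H1s, ∀ b, γm (R b) = b ∧ γp (R b) = b := by
  have hinv : (γm.prod γp).HasRightInverse :=
    hasRightInverse_of_surjective_of_antilipschitz
      (antilipschitzWith_l2Pair one_pos fun u => (one_mul _).trans_le (hnorm u).le)
      fun ab => (hsurj ab.1 ab.2).imp fun w hw => Prod.ext hw.1 hw.2
  refine ⟨hinv.rightInverse ∘L (ContinuousLinearMap.id ℝ Hp).prod (.id ℝ Hp), fun b => ?_⟩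
  exact Prod.ext_iff.1 (hinv.rightInverse_rightInverse (b, b))

theorem exists_inner_add_inner_eq [CompleteSpace L2Ω] [CompleteSpace L2Ωv] [CompleteSpace H1Ω]
    {C : NNReal} {S : H1Ω →L[ℝ] L2Ω} {T : H1Ω →L[ℝ] L2Ωv} (hST : AntilipschitzWith C (l2Pair S T))
    (B : Hm →L[ℝ] StrongDual ℝ H1Ω) :
    ∃ (p : Hm →L[ℝ] L2Ω) (q : Hm →L[ℝ] L2Ωv), ∀ b w, ⟪p b, S w⟫ + ⟪q b, T w⟫ = B b w := by
  obtain ⟨riesz, hriesz⟩ := exists_inner_eq_of_hasLeftInverse (hasLeftInverse_of_antilipschitz hST)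
  refine ⟨WithLp.fstL 2 ℝ L2Ω L2Ωv ∘L riesz ∘L B, WithLp.sndL 2 ℝ L2Ω L2Ωv ∘L riesz ∘L B,
    fun b w => ?_⟩
  exact (inner_l2Pair_right S T (riesz (B b)) w).symm.trans (hriesz (B b) w)

theorem min_mul_norm_sq_le_norm_sq_add_norm_sq
    (hnorm : ∀ u : H1Ω, ‖u‖ ^ 2 = ‖ι u‖ ^ 2 + ‖grad u‖ ^ 2)
    (hcinv : ∀ x y : L2Ω, ⟪cinv2 x, y⟫ = ⟪cinv x, cinv y⟫)
    (hκhalf : ∀ x y : L2Ωv, ⟪kap x, y⟫ = ⟪khalf x, khalf y⟫) {c0 κ0 : ℝ}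
    (hc2pos : ∀ x : L2Ω, c0 * ‖x‖ ^ 2 ≤ ⟪cinv2 x, x⟫)
    (hκpos : ∀ x : L2Ωv, κ0 * ‖x‖ ^ 2 ≤ ⟪kap x, x⟫) (u : H1Ω) :
    min c0 κ0 * ‖u‖ ^ 2 ≤ ‖(cinv ∘L ι) u‖ ^ 2 + ‖(khalf ∘L grad) u‖ ^ 2 := by
  rw [hnorm, mul_add, ContinuousLinearMap.comp_apply, ContinuousLinearMap.comp_apply,
    ← real_inner_self_eq_norm_sq (cinv (ι u)), ← real_inner_self_eq_norm_sq (khalf (grad u)),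
    ← hcinv, ← hκhalf]
  exact add_le_add
    ((mul_le_mul_of_nonneg_right (min_le_left c0 κ0) (sq_nonneg _)).trans (hc2pos _))
    ((mul_le_mul_of_nonneg_right (min_le_right c0 κ0) (sq_nonneg _)).trans (hκpos _))

/-- The conforming pairs of interior and exterior fields: the interior field is discrete, the jump
of the exterior trace lies in `Yh`, and the two interior traces agree when tested against `Xh`. -/
def conformingPairs (γ : H1Ω →L[ℝ] Hp) (γm γp : H1s →L[ℝ] Hp) (dpair : Hm →L[ℝ] Hp →L[ℝ] ℝ)
    (Uh : Submodule ℝ H1Ω) (Xh : Submodule ℝ Hm) (Yh : Submodule ℝ Hp) :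
    Submodule ℝ (H1Ω × H1s) where
  carrier := {w | w.1 ∈ Uh ∧ γm w.2 - γp w.2 ∈ Yh ∧ ∀ μ ∈ Xh, dpair μ (γ w.1 - γp w.2) = 0}
  zero_mem' := by simp
  add_mem' {v w} hv hw := by
    refine ⟨Uh.add_mem hv.1 hw.1, ?_, fun μ hμ => ?_⟩
    · simpa only [Prod.snd_add, map_add, add_sub_add_comm] using Yh.add_mem hv.2.1 hw.2.1
    · simp only [Prod.fst_add, Prod.snd_add, map_add, add_sub_add_comm, hv.2.2 μ hμ, hw.2.2 μ hμ,
        add_zero]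
  smul_mem' r w hw := by
    refine ⟨Uh.smul_mem r hw.1, ?_, fun μ hμ => ?_⟩
    · simpa only [Prod.smul_snd, map_smul, smul_sub] using Yh.smul_mem r hw.2.1
    · simp only [Prod.smul_fst, Prod.smul_snd, map_smul, ← smul_sub, hw.2.2 μ hμ, smul_zero]

theorem inner_div_add_inner_grad_eq_of_mem_conformingPairs
    (hGreen : ∀ (v : Hdiv) (w : H1s), ⟪divs v, ιs w⟫ + ⟪ιdiv v, grads w⟫
      = dpair (γνm v) (γm w) - dpair (γνp v) (γp w))
    {z : H1Ω × H1s} (hz : z ∈ conformingPairs γ γm γp dpair Uh Xh Yh) {v : Hdiv}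
    (hvY : ∀ ψ ∈ Yh, dpair (γνm v) ψ = 0) (hvX : γνm v - γνp v ∈ Xh) :
    ⟪divs v, ιs z.2⟫ + ⟪ιdiv v, grads z.2⟫ = dpair (γνm v - γνp v) (γ z.1) := by
  have hjump := hvY _ hz.2.1
  have htrace := hz.2.2 _ hvX
  rw [hGreen]
  simp only [map_sub, sub_apply] at hjump htrace ⊢
  linear_combination hjump - htrace

/-- The variational form of the transmission problem on pairs of interior and exterior fields. The
lifting is `b ↦ (0, -R b)` and the loads act on the interior field only. -/
def coupledSystem (ι : H1Ω →L[ℝ] L2Ω) (grad : H1Ω →L[ℝ] L2Ωv) (γ : H1Ω →L[ℝ] Hp)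
    (ιs : H1s →L[ℝ] L2s) (grads : H1s →L[ℝ] L2sv) (γm γp : H1s →L[ℝ] Hp)
    (dpair : Hm →L[ℝ] Hp →L[ℝ] ℝ) (cinv : L2Ω →L[ℝ] L2Ω) (khalf : L2Ωv →L[ℝ] L2Ωv)
    (R : Hp →L[ℝ] H1s) (p : Hm →L[ℝ] L2Ω) (q : Hm →L[ℝ] L2Ωv)
    (Uh : Submodule ℝ H1Ω) (Xh : Submodule ℝ Hm) (Yh : Submodule ℝ Hp) :
    WaveSystem (H1Ω × H1s) (WithLp 2 (L2Ω × L2s)) (WithLp 2 (L2Ωv × L2sv)) Hp Hm where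
  mass := l2Pair (cinv ∘L ι ∘L .fst ℝ H1Ω H1s) (ιs ∘L .snd ℝ H1Ω H1s)
  stiffness := l2Pair (khalf ∘L grad ∘L .fst ℝ H1Ω H1s) (grads ∘L .snd ℝ H1Ω H1s)
  trial := conformingPairs γ γm γp dpair Uh Xh Yh
  lift := .inr ℝ H1Ω H1s ∘L (-R)
  massLoad := l2Pair p 0
  stiffnessLoad := l2Pair q 0

theorem sub_lift_mem_trial_coupledSystem (hR : ∀ b, γm (R b) = b ∧ γp (R b) = b)
    {u : H1Ω} {us : H1s} {b : Hp} (hu : u ∈ Uh) (hjump : γm us - γp us ∈ Yh)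
    (htrace : ∀ μ ∈ Xh, dpair μ (γ u - γp us - b) = 0) :
    (u, us) - (coupledSystem ι grad γ ιs grads γm γp dpair cinv khalf R p q Uh Xh Yh).lift b
      ∈ (coupledSystem ι grad γ ιs grads γm γp dpair cinv khalf R p q Uh Xh Yh).trial := by
  have hdiff : (u, us) - (ContinuousLinearMap.inr ℝ H1Ω H1s ∘L (-R)) b = (u, us + R b) := by simp
  change (u, us) - (ContinuousLinearMap.inr ℝ H1Ω H1s ∘L (-R)) b ∈ conformingPairs ..
  rw [hdiff]
  refine ⟨hu, ?_, fun μ hμ => ?_⟩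
  · simpa only [map_add, (hR b).1, (hR b).2, add_sub_add_right_eq_sub] using hjump
  · simpa only [map_add, (hR b).2, sub_add_eq_sub_sub] using htrace μ hμ

theorem weak_eq_coupledSystem
    (hGreen : ∀ (v : Hdiv) (w : H1s), ⟪divs v, ιs w⟫ + ⟪ιdiv v, grads w⟫
      = dpair (γνm v) (γm w) - dpair (γνp v) (γp w))
    (hcinv : ∀ x y : L2Ω, ⟪cinv2 x, y⟫ = ⟪cinv x, cinv y⟫)
    (hκhalf : ∀ x y : L2Ωv, ⟪kap x, y⟫ = ⟪khalf x, khalf y⟫)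
    (hpq : ∀ b w, ⟪p b, cinv (ι w)⟫ + ⟪q b, khalf (grad w)⟫ = dpair b (γ w))
    {a : WithLp 2 (L2Ω × L2s)} {x : L2Ω} {u : H1Ω} {us : H1s} {v : Hdiv} {b : Hm}
    (hfst : a.fst = cinv x) (hsnd : a.snd = divs v) (hgrad : ιdiv v = grads us)
    (hvY : ∀ ψ ∈ Yh, dpair (γνm v) ψ = 0) (hvX : γνm v - γνp v ∈ Xh)
    (hinterior : ∀ w ∈ Uh, ⟪cinv2 x, ι w⟫ + ⟪kap (grad u), grad w⟫
      + dpair (γνm v - γνp v) (γ w) = dpair b (γ w))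
    {z : H1Ω × H1s} (hz : z ∈ conformingPairs γ γm γp dpair Uh Xh Yh) :
    let S := coupledSystem ι grad γ ιs grads γm γp dpair cinv khalf R p q Uh Xh Yh
    ⟪a, S.mass z⟫ + ⟪S.stiffness (u, us), S.stiffness z⟫
      = ⟪S.massLoad b, S.mass z⟫ + ⟪S.stiffnessLoad b, S.stiffness z⟫ := by
  intro S
  have hmass : ⟪a, S.mass z⟫ = ⟪cinv2 x, ι z.1⟫ + ⟪divs v, ιs z.2⟫ := by
    rw [hcinv, ← hfst, ← hsnd]
    exact inner_l2Pair_right ..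
  have hstiffness : ⟪S.stiffness (u, us), S.stiffness z⟫
      = ⟪kap (grad u), grad z.1⟫ + ⟪ιdiv v, grads z.2⟫ := by
    rw [hκhalf, hgrad]
    exact inner_l2Pair_right ..
  have hmassLoad : ⟪S.massLoad b, S.mass z⟫ = ⟪p b, cinv (ι z.1)⟫ :=
    (inner_l2Pair_right ..).trans (add_eq_left.2 (inner_zero_left _))
  have hstiffnessLoad : ⟪S.stiffnessLoad b, S.stiffness z⟫ = ⟪q b, khalf (grad z.1)⟫ :=
    (inner_l2Pair_right ..).trans (add_eq_left.2 (inner_zero_left _))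
  have hcoupling := inner_div_add_inner_grad_eq_of_mem_conformingPairs hGreen hz hvY hvX
  linear_combination hmass + hstiffness - hmassLoad - hstiffnessLoad + hcoupling
    + hinterior z.1 hz.1 - hpq b z.1

theorem norm_add_norm_le_norm_mass_coupledSystem
    (hcinv : ∀ x y : L2Ω, ⟪cinv2 x, y⟫ = ⟪cinv x, cinv y⟫) {c0 : ℝ} (hc0 : 0 < c0)
    (hc2pos : ∀ x : L2Ω, c0 * ‖x‖ ^ 2 ≤ ⟪cinv2 x, x⟫) (w : H1Ω × H1s) :
    ‖ι w.1‖ + ‖ιs w.2‖ ≤ (√c0⁻¹ + 1)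
      * ‖(coupledSystem ι grad γ ιs grads γm γp dpair cinv khalf R p q Uh Xh Yh).mass w‖ := by
  set Z := ‖(coupledSystem ι grad γ ιs grads γm γp dpair cinv khalf R p q Uh Xh Yh).mass w‖
  have hsq : Z ^ 2 = ‖cinv (ι w.1)‖ ^ 2 + ‖ιs w.2‖ ^ 2 := norm_l2Pair_sq _ _ w
  have hc := hc2pos (ι w.1)
  rw [hcinv, real_inner_self_eq_norm_sq] at hc
  have hinterior : ‖ι w.1‖ ≤ √c0⁻¹ * Z :=
    le_sqrt_inv_mul_of_mul_sq_le hc0 (norm_nonneg _) (by linarith [sq_nonneg ‖ιs w.2‖])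
  have hexterior : ‖ιs w.2‖ ≤ Z :=
    (abs_le_of_sq_le_sq' (by linarith [sq_nonneg ‖cinv (ι w.1)‖]) (norm_nonneg _)).2
  linarith

end CoupledSystem

section Transmission

variable {L2Ω L2Ωv L2s L2sv Hp Hm H1Ω H1s Hdiv : Type*}
  [NormedAddCommGroup L2Ω] [InnerProductSpace ℝ L2Ω]
  [NormedAddCommGroup L2Ωv] [InnerProductSpace ℝ L2Ωv]
  [NormedAddCommGroup L2s] [InnerProductSpace ℝ L2s]
  [NormedAddCommGroup L2sv] [InnerProductSpace ℝ L2sv]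
  [NormedAddCommGroup Hp] [InnerProductSpace ℝ Hp] [NormedAddCommGroup Hm] [InnerProductSpace ℝ Hm]
  [NormedAddCommGroup H1Ω] [NormedSpace ℝ H1Ω] [NormedAddCommGroup H1s] [NormedSpace ℝ H1s]
  [NormedAddCommGroup Hdiv] [NormedSpace ℝ Hdiv]
  {ι : H1Ω →L[ℝ] L2Ω} {grad : H1Ω →L[ℝ] L2Ωv} {γ : H1Ω →L[ℝ] Hp}
  {ιs : H1s →L[ℝ] L2s} {grads : H1s →L[ℝ] L2sv} {γm γp : H1s →L[ℝ] Hp}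
  {ιdiv : Hdiv →L[ℝ] L2sv} {divs : Hdiv →L[ℝ] L2s} {γνm γνp : Hdiv →L[ℝ] Hm}
  {dpair : Hm →L[ℝ] Hp →L[ℝ] ℝ} {cinv cinv2 : L2Ω →L[ℝ] L2Ω} {kap khalf : L2Ωv →L[ℝ] L2Ωv}
  {R : Hp →L[ℝ] H1s} {p : Hm →L[ℝ] L2Ω} {q : Hm →L[ℝ] L2Ωv}
  {Uh : Submodule ℝ H1Ω} {Xh : Submodule ℝ Hm} {Yh : Submodule ℝ Hp} {k : ℝ}
  {β0 : ℝ → Hp} {β1 : ℝ → Hm} {uh ukh : ℝ → H1Ω} {us uks : ℝ → H1s} {wst wkst : ℝ → Hdiv}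

theorem Solves210.isSolution
    (h : Solves210 ι grad γ ιs grads γm γp ιdiv divs γνm γνp dpair cinv2 kap Uh Xh Yh β0 β1
      uh us wst)
    (hGreen : ∀ (v : Hdiv) (w : H1s), ⟪divs v, ιs w⟫ + ⟪ιdiv v, grads w⟫
      = dpair (γνm v) (γm w) - dpair (γνp v) (γp w))
    (hcinv : ∀ x y : L2Ω, ⟪cinv2 x, y⟫ = ⟪cinv x, cinv y⟫)
    (hκhalf : ∀ x y : L2Ωv, ⟪kap x, y⟫ = ⟪khalf x, khalf y⟫)
    (hR : ∀ b, γm (R b) = b ∧ γp (R b) = b)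
    (hpq : ∀ b w, ⟪p b, cinv (ι w)⟫ + ⟪q b, khalf (grad w)⟫ = dpair b (γ w)) :
    (coupledSystem ι grad γ ιs grads γm γp dpair cinv khalf R p q Uh Xh Yh).IsSolution β0 β1
      fun τ => (uh τ, us τ) := by
  obtain ⟨huh, hcuh, hcus, -, hduh, hdus, hcontuh, hcontus, hgrad, hinterior, hexterior, hjump,
    hnormal, hpolar, htrace⟩ := h
  set S := coupledSystem ι grad γ ιs grads γm γp dpair cinv khalf R p q Uh Xh Yh
  have hmass : ContDiff ℝ 2 fun τ => S.mass (uh τ, us τ) :=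
    (l2Pair (cinv ∘L .fst ℝ L2Ω L2s) (.snd ℝ L2Ω L2s)).contDiff.comp (hduh.prodMk hdus)
  refine ⟨hcontuh.prodMk hcontus, fun τ hτ => Prod.ext (hcuh τ hτ) (hcus τ hτ), hmass,
    fun τ => sub_lift_mem_trial_coupledSystem hR (huh τ) (hjump τ) (htrace τ), fun τ z hz => ?_⟩
  have hfst : (iteratedDeriv 2 (fun τ => S.mass (uh τ, us τ)) τ).fst
      = cinv (iteratedDeriv 2 (fun τ => ι (uh τ)) τ) :=
    (congrFun (iteratedDeriv_clm_comp (n := 2) (WithLp.fstL 2 ℝ L2Ω L2s) hmass) τ).symm.trans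
      (congrFun (iteratedDeriv_clm_comp (n := 2) cinv hduh) τ)
  have hsnd : (iteratedDeriv 2 (fun τ => S.mass (uh τ, us τ)) τ).snd = divs (wst τ) :=
    (congrFun (iteratedDeriv_clm_comp (n := 2) (WithLp.sndL 2 ℝ L2Ω L2s) hmass) τ).symm.trans
      (hexterior τ)
  exact weak_eq_coupledSystem hGreen hcinv hκhalf hpq hfst hsnd (hgrad τ) (hpolar τ) (hnormal τ)
    (hinterior τ) hz

theorem Solves43.isDiscreteSolution
    (h : Solves43 ι grad γ ιs grads γm γp ιdiv divs γνm γνp dpair cinv2 kap Uh Xh Yh k β0 β1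
      ukh uks wkst)
    (hGreen : ∀ (v : Hdiv) (w : H1s), ⟪divs v, ιs w⟫ + ⟪ιdiv v, grads w⟫
      = dpair (γνm v) (γm w) - dpair (γνp v) (γp w))
    (hcinv : ∀ x y : L2Ω, ⟪cinv2 x, y⟫ = ⟪cinv x, cinv y⟫)
    (hκhalf : ∀ x y : L2Ωv, ⟪kap x, y⟫ = ⟪khalf x, khalf y⟫)
    (hR : ∀ b, γm (R b) = b ∧ γp (R b) = b)
    (hpq : ∀ b w, ⟪p b, cinv (ι w)⟫ + ⟪q b, khalf (grad w)⟫ = dpair b (γ w)) :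
    (coupledSystem ι grad γ ιs grads γm γp dpair cinv khalf R p q Uh Xh Yh).IsDiscreteSolution k
      β0 β1 fun τ => (ukh τ, uks τ) := by
  obtain ⟨hukh, hcukh, hcuks, -, hgrad, hinterior, hexterior, hjump, hnormal, hpolar, htrace⟩ := h
  refine ⟨fun τ hτ => Prod.ext (hcukh τ hτ) (hcuks τ hτ),
    fun τ => sub_lift_mem_trial_coupledSystem hR (hukh τ) (hjump τ) (htrace τ), fun τ z hz => ?_⟩
  set S := coupledSystem ι grad γ ιs grads γm γp dpair cinv khalf R p q Uh Xh Yh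
  have hfst : (dquot k (dquot k fun τ => S.mass (ukh τ, uks τ)) τ).fst
      = cinv (dquot k (dquot k fun τ => ι (ukh τ)) τ) := by
    simp only [map_dquot]
    rfl
  have hsnd : (dquot k (dquot k fun τ => S.mass (ukh τ, uks τ)) τ).snd
      = divs (amean k (amean k wkst) τ) := by
    simp only [map_amean, ← hexterior]
    rfl
  have hgrad' : ιdiv (amean k (amean k wkst) τ) = grads (amean k (amean k uks) τ) := by
    simp only [map_amean, hgrad]
  have hpolar' (ψ) (hψ : ψ ∈ Yh) : dpair (γνm (amean k (amean k wkst) τ)) ψ = 0 := by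
    simp [amean, hpolar _ ψ hψ]
  have hjump_amean : γνm (amean k (amean k wkst) τ) - γνp (amean k (amean k wkst) τ)
      = amean k (amean k fun τ => γνm (wkst τ) - γνp (wkst τ)) τ := by
    change (γνm - γνp) _ = amean k (amean k fun τ => (γνm - γνp) (wkst τ)) τ
    simp only [map_amean]
  have hnormal' : γνm (amean k (amean k wkst) τ) - γνp (amean k (amean k wkst) τ) ∈ Xh := by
    rw [hjump_amean]
    exact amean_mem (amean_mem hnormal k) k τ
  exact weak_eq_coupledSystem hGreen hcinv hκhalf hpq hfst hsnd hgrad' hpolar' hnormal'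
    (hjump_amean ▸ hinterior τ) hz

theorem Solves210.norm_sub_add_norm_sub_le [CompleteSpace L2Ω] [CompleteSpace L2Ωv]
    [CompleteSpace L2s] [CompleteSpace L2sv] [CompleteSpace H1Ω] [CompleteSpace H1s]
    (h : Solves210 ι grad γ ιs grads γm γp ιdiv divs γνm γνp dpair cinv2 kap Uh Xh Yh β0 β1
      uh us wst)
    (hd : Solves43 ι grad γ ιs grads γm γp ιdiv divs γνm γνp dpair cinv2 kap Uh Xh Yh k β0 β1
      ukh uks wkst)
    (hGreen : ∀ (v : Hdiv) (w : H1s), ⟪divs v, ιs w⟫ + ⟪ιdiv v, grads w⟫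
      = dpair (γνm v) (γm w) - dpair (γνp v) (γp w))
    (hcinv : ∀ x y : L2Ω, ⟪cinv2 x, y⟫ = ⟪cinv x, cinv y⟫)
    (hκhalf : ∀ x y : L2Ωv, ⟪kap x, y⟫ = ⟪khalf x, khalf y⟫)
    (hR : ∀ b, γm (R b) = b ∧ γp (R b) = b)
    (hpq : ∀ b w, ⟪p b, cinv (ι w)⟫ + ⟪q b, khalf (grad w)⟫ = dpair b (γ w))
    {c0 : ℝ} (hc0 : 0 < c0) (hc2pos : ∀ x : L2Ω, c0 * ‖x‖ ^ 2 ≤ ⟪cinv2 x, x⟫)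
    (hβ0 : ContDiff ℝ 5 β0) (hβ0c : Causal β0) (hβ1 : ContDiff ℝ 4 β1) (hβ1c : Causal β1)
    (hk : 0 < k) {t : ℝ} (ht : 0 ≤ t) :
    ‖ι (uh t) - ι (ukh t)‖ + ‖ιs (us t) - ιs (uks t)‖ ≤ (√c0⁻¹ + 1)
      * ((coupledSystem ι grad γ ιs grads γm γp dpair cinv khalf R p q Uh Xh Yh).errorConst
        * (Hfun 1 (iteratedDeriv 4 β0) t + Hfun 1 (iteratedDeriv 3 β1) t) * k ^ 2 * t ^ 2) := by
  have hmass := (h.isSolution hGreen hcinv hκhalf hR hpq).norm_mass_sub_le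
    (hd.isDiscreteSolution hGreen hcinv hκhalf hR hpq) hβ0 hβ0c hβ1 hβ1c hk ht
  rw [← map_sub, ← map_sub]
  exact (norm_add_norm_le_norm_mass_coupledSystem hcinv hc0 hc2pos
    ((uh t, us t) - (ukh t, uks t))).trans (mul_le_mul_of_nonneg_left hmass (by positivity))

end Transmission

theorem fully_discrete_L2_estimate_general
    {L2Ω L2Ωv L2s L2sv Hp Hm H1Ω H1s Hdiv : Type*}
    [NormedAddCommGroup L2Ω] [InnerProductSpace ℝ L2Ω] [CompleteSpace L2Ω]
    [NormedAddCommGroup L2Ωv] [InnerProductSpace ℝ L2Ωv] [CompleteSpace L2Ωv]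
    [NormedAddCommGroup L2s] [InnerProductSpace ℝ L2s] [CompleteSpace L2s]
    [NormedAddCommGroup L2sv] [InnerProductSpace ℝ L2sv] [CompleteSpace L2sv]
    [NormedAddCommGroup Hp] [InnerProductSpace ℝ Hp] [CompleteSpace Hp]
    [NormedAddCommGroup Hm] [InnerProductSpace ℝ Hm]
    [NormedAddCommGroup H1Ω] [NormedSpace ℝ H1Ω] [CompleteSpace H1Ω]
    [NormedAddCommGroup H1s] [NormedSpace ℝ H1s] [CompleteSpace H1s]
    [NormedAddCommGroup Hdiv] [NormedSpace ℝ Hdiv]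
    (ι : H1Ω →L[ℝ] L2Ω) (grad : H1Ω →L[ℝ] L2Ωv) (γ : H1Ω →L[ℝ] Hp)
    (ιs : H1s →L[ℝ] L2s) (grads : H1s →L[ℝ] L2sv) (γm γp : H1s →L[ℝ] Hp)
    (ιdiv : Hdiv →L[ℝ] L2sv) (divs : Hdiv →L[ℝ] L2s) (γνm γνp : Hdiv →L[ℝ] Hm)
    (dpair : Hm →L[ℝ] Hp →L[ℝ] ℝ)
    (cinv cinv2 : L2Ω →L[ℝ] L2Ω) (kap khalf : L2Ωv →L[ℝ] L2Ωv)
    (hGreen : ∀ (v : Hdiv) (w : H1s),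
      ⟪divs v, ιs w⟫ + ⟪ιdiv v, grads w⟫
        = dpair (γνm v) (γm w) - dpair (γνp v) (γp w))
    (htrace_surj : ∀ a b : Hp, ∃ w : H1s, γm w = a ∧ γp w = b)
    (hH1Ωnorm : ∀ u : H1Ω, ‖u‖ ^ 2 = ‖ι u‖ ^ 2 + ‖grad u‖ ^ 2)
    (hH1snorm : ∀ u : H1s, ‖u‖ ^ 2 = ‖ιs u‖ ^ 2 + ‖grads u‖ ^ 2)
    (hcinv : ∀ x y : L2Ω, ⟪cinv2 x, y⟫ = ⟪cinv x, cinv y⟫)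
    (hκhalf : ∀ x y : L2Ωv, ⟪kap x, y⟫ = ⟪khalf x, khalf y⟫)
    (c0 κ0 : ℝ) (hc0 : 0 < c0) (hκ0 : 0 < κ0)
    (hc2pos : ∀ x : L2Ω, c0 * ‖x‖ ^ 2 ≤ ⟪cinv2 x, x⟫)
    (hκpos : ∀ x : L2Ωv, κ0 * ‖x‖ ^ 2 ≤ ⟪kap x, x⟫) :
    ∃ C : ℝ, 0 < C ∧
      ∀ (Uh : Submodule ℝ H1Ω) (Xh : Submodule ℝ Hm) (Yh : Submodule ℝ Hp),
        ∀ k : ℝ, 0 < k →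
        ∀ (β0 : ℝ → Hp) (β1 : ℝ → Hm),
          ContDiff ℝ 5 β0 → Causal β0 → ContDiff ℝ 4 β1 → Causal β1 →
        ∀ (uh : ℝ → H1Ω) (us : ℝ → H1s) (wst : ℝ → Hdiv),
          Solves210 ι grad γ ιs grads γm γp ιdiv divs γνm γνp dpair cinv2 kap
            Uh Xh Yh β0 β1 uh us wst →
        ∀ (ukh : ℝ → H1Ω) (uks : ℝ → H1s) (wkst : ℝ → Hdiv),
          Solves43 ι grad γ ιs grads γm γp ιdiv divs γνm γνp dpair cinv2 kap
            Uh Xh Yh k β0 β1 ukh uks wkst →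
        ∀ t : ℝ, 0 ≤ t →
          ‖ι (uh t) - ι (ukh t)‖ + ‖ιs (us t) - ιs (uks t)‖
          ≤ C * k ^ 2 * t ^ 2
            * (Hfun 1 (iteratedDeriv 4 β0) t + Hfun 1 (iteratedDeriv 3 β1) t) := by
  obtain ⟨R, hR⟩ := exists_common_rightInverse hH1snorm htrace_surj
  obtain ⟨p, q, hpq⟩ := exists_inner_add_inner_eq
    (antilipschitzWith_l2Pair (lt_min hc0 hκ0)
      (min_mul_norm_sq_le_norm_sq_add_norm_sq hH1Ωnorm hcinv hκhalf hc2pos hκpos))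
    ((ContinuousLinearMap.precomp ℝ γ) ∘L dpair)
  -- The error constant does not see the trial space, so any discrete spaces may be chosen here.
  let A := (coupledSystem ι grad γ ιs grads γm γp dpair cinv khalf R p q ⊥ ⊥ ⊥).errorConst
  have hA : 0 ≤ A := WaveSystem.errorConst_nonneg _
  refine ⟨(√c0⁻¹ + 1) * (A + 1), by positivity, fun Uh Xh Yh k hk β0 β1 hβ0 hβ0c hβ1 hβ1c uh us wst
    h ukh uks wkst hd t ht => ?_⟩
  have hH : 0 ≤ Hfun 1 (iteratedDeriv 4 β0) t + Hfun 1 (iteratedDeriv 3 β1) t :=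
    add_nonneg (Hfun_nonneg 1 _ ht) (Hfun_nonneg 1 _ ht)
  calc ‖ι (uh t) - ι (ukh t)‖ + ‖ιs (us t) - ιs (uks t)‖
      ≤ (√c0⁻¹ + 1) * (A * (Hfun 1 (iteratedDeriv 4 β0) t + Hfun 1 (iteratedDeriv 3 β1) t)
          * k ^ 2 * t ^ 2) :=
        h.norm_sub_add_norm_sub_le hd hGreen hcinv hκhalf hR hpq hc0 hc2pos hβ0 hβ0c hβ1 hβ1c hk ht
    _ ≤ (√c0⁻¹ + 1) * ((A + 1)
          * (Hfun 1 (iteratedDeriv 4 β0) t + Hfun 1 (iteratedDeriv 3 β1) t) * k ^ 2 * t ^ 2) := by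
        gcongr
        exact le_add_of_nonneg_right zero_le_one
    _ = _ := by ring

/-- Fully discrete $L^2$ estimate (Theorem 4.2, estimate (4.6)) for trapezoidal-rule time
discretization of the semidiscrete problem (2.10). -/
theorem fully_discrete_L2_estimate
    {L2Ω L2Ωv L2s L2sv Hp Hm H1Ω H1s Hdiv : Type*}
    [NormedAddCommGroup L2Ω] [InnerProductSpace ℝ L2Ω] [CompleteSpace L2Ω]
    [NormedAddCommGroup L2Ωv] [InnerProductSpace ℝ L2Ωv] [CompleteSpace L2Ωv]
    [NormedAddCommGroup L2s] [InnerProductSpace ℝ L2s] [CompleteSpace L2s]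
    [NormedAddCommGroup L2sv] [InnerProductSpace ℝ L2sv] [CompleteSpace L2sv]
    [NormedAddCommGroup Hp] [InnerProductSpace ℝ Hp] [CompleteSpace Hp]
    [NormedAddCommGroup Hm] [InnerProductSpace ℝ Hm] [CompleteSpace Hm]
    [NormedAddCommGroup H1Ω] [NormedSpace ℝ H1Ω] [CompleteSpace H1Ω]
    [NormedAddCommGroup H1s] [NormedSpace ℝ H1s] [CompleteSpace H1s]
    [NormedAddCommGroup Hdiv] [NormedSpace ℝ Hdiv] [CompleteSpace Hdiv]
    (ι : H1Ω →L[ℝ] L2Ω) (grad : H1Ω →L[ℝ] L2Ωv) (γ : H1Ω →L[ℝ] Hp)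
    (ιs : H1s →L[ℝ] L2s) (grads : H1s →L[ℝ] L2sv) (γm γp : H1s →L[ℝ] Hp)
    (ιdiv : Hdiv →L[ℝ] L2sv) (divs : Hdiv →L[ℝ] L2s) (γνm γνp : Hdiv →L[ℝ] Hm)
    (dpair : Hm →L[ℝ] Hp →L[ℝ] ℝ)
    (cinv cinv2 : L2Ω →L[ℝ] L2Ω) (kap khalf : L2Ωv →L[ℝ] L2Ωv)
    (hGreen : ∀ (v : Hdiv) (w : H1s),
      ⟪divs v, ιs w⟫ + ⟪ιdiv v, grads w⟫
        = dpair (γνm v) (γm w) - dpair (γνp v) (γp w))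
    (htrace_surj : ∀ a b : Hp, ∃ w : H1s, γm w = a ∧ γp w = b)
    (hH1Ωnorm : ∀ u : H1Ω, ‖u‖ ^ 2 = ‖ι u‖ ^ 2 + ‖grad u‖ ^ 2)
    (hH1snorm : ∀ u : H1s, ‖u‖ ^ 2 = ‖ιs u‖ ^ 2 + ‖grads u‖ ^ 2)
    (hHdivnorm : ∀ v : Hdiv, ‖v‖ ^ 2 = ‖ιdiv v‖ ^ 2 + ‖divs v‖ ^ 2)
    (hcinv : ∀ x y : L2Ω, ⟪cinv2 x, y⟫ = ⟪cinv x, cinv y⟫)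
    (hκhalf : ∀ x y : L2Ωv, ⟪kap x, y⟫ = ⟪khalf x, khalf y⟫)
    (c0 κ0 : ℝ) (hc0 : 0 < c0) (hκ0 : 0 < κ0)
    (hc2pos : ∀ x : L2Ω, c0 * ‖x‖ ^ 2 ≤ ⟪cinv2 x, x⟫)
    (hκpos : ∀ x : L2Ωv, κ0 * ‖x‖ ^ 2 ≤ ⟪kap x, x⟫) :
    ∃ C : ℝ, 0 < C ∧
      ∀ (Uh : Submodule ℝ H1Ω) (Xh : Submodule ℝ Hm) (Yh : Submodule ℝ Hp),
        FiniteDimensional ℝ Uh → FiniteDimensional ℝ Xh → FiniteDimensional ℝ Yh →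
        ∀ k : ℝ, 0 < k →
        ∀ (β0 : ℝ → Hp) (β1 : ℝ → Hm), WP 6 β0 → WP 5 β1 →
        ∀ (uh : ℝ → H1Ω) (us : ℝ → H1s) (wst : ℝ → Hdiv),
          Solves210 ι grad γ ιs grads γm γp ιdiv divs γνm γνp dpair cinv2 kap
            Uh Xh Yh β0 β1 uh us wst →
        ∀ (ukh : ℝ → H1Ω) (uks : ℝ → H1s) (wkst : ℝ → Hdiv),
          Solves43 ι grad γ ιs grads γm γp ιdiv divs γνm γνp dpair cinv2 kap
            Uh Xh Yh k β0 β1 ukh uks wkst →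
        ∀ t : ℝ, 0 ≤ t →
          ‖ι (uh t) - ι (ukh t)‖ + ‖ιs (us t) - ιs (uks t)‖
          ≤ C * k ^ 2 * t ^ 2 * (Hfun 3 (iteratedDeriv 3 β0) t + Hfun 2 (iteratedDeriv 3 β1) t) := by
  obtain ⟨C, hC, h⟩ := fully_discrete_L2_estimate_general ι grad γ ιs grads γm γp ιdiv divs γνm γνp
    dpair cinv cinv2 kap khalf hGreen htrace_surj hH1Ωnorm hH1snorm hcinv hκhalf c0 κ0 hc0 hκ0
    hc2pos hκpos
  refine ⟨C, hC, fun Uh Xh Yh _ _ _ k hk β0 β1 hβ0 hβ1 uh us wst hsol ukh uks wkst hdsol t ht => ?_⟩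
  exact (h Uh Xh Yh k hk β0 β1 hβ0.1 hβ0.2.1 hβ1.1 hβ1.2.1 uh us wst hsol ukh uks wkst hdsol t
    ht).trans (mul_le_mul_of_nonneg_left (add_le_add
      (Hfun_iteratedDeriv_le (p := 1) (q := 3) β0 (by norm_num) ht)
      (Hfun_iteratedDeriv_le (p := 0) (q := 3) β1 (by norm_num) ht)) (by positivity))
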